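/- Let η_{ν,m}(x) := 2^{νn}(1 + 2^ν|x|)^{−m}. Let p, q ∈ P^log(ℝ^n) and u a variable exponent with 1 < p^- ≤ p(x) ≤ u(x) ≤ sup u < ∞ for a.e. x, and 1 < q^- ≤ q^+ < ∞. Set c_{p,u} := max(0, sup_{x∈ℝ^n}(1/p(x) − 1/u(x)) − 1/p_∞). Then for every m > n + n·c_{p,u} there exists c > 0 such that for all sequences (f_ν)_{ν∈ℕ_0} of measurable functions on ℝ^n one has ‖(∑_{ν=0}^∞ |(η_{ν,m} ∗ f_ν)(·)|^{q(·)})^{1/q(·)}‖_{M^{u(·)}_{p(·)}(ℝ^n)} ≤ c ‖(∑_{ν=0}^∞ |f_ν(·)|^{q(·)})^{1/q(·)}‖_{M^{u(·)}_{p(·)}(ℝ^n)}. -/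

import Mathlib

open MeasureTheory ENNReal Real
open scoped FourierTransform

noncomputable section

/-- Euclidean space `ℝ^n`. -/
abbrev Rn (n : ℕ) : Type := EuclideanSpace ℝ (Fin n)

variable {n : ℕ}

/-- The function `φ_t(s)` used in the semimodular of variable exponent Lebesgue spaces:
`φ_t(s) = s^t` for `t < ∞`, while `φ_∞(s) = 0` for `s ≤ 1` and `= ∞` for `s > 1`. -/
def phiVE (t : ℝ≥0∞) (s : ℝ≥0∞) : ℝ≥0∞ :=
  if t = ∞ then (if s ≤ 1 then 0 else ∞) else s ^ t.toReal

/-- The semimodular `ρ_p` of variable exponent Lebesgue spaces. -/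
def modularVE (p : Rn n → ℝ≥0∞) (g : Rn n → ℝ≥0∞) : ℝ≥0∞ :=
  ∫⁻ x, phiVE (p x) (g x)

/-- The variable exponent Lebesgue quasi-norm `‖·‖_{L^{p(·)}(ℝ^n)}`, applied to the
(pointwise) absolute value of a function, i.e. to `[0,∞]`-valued functions.
(For `p⁻ ≥ 1` this is the usual Luxemburg norm; for general `p` it agrees with the
definition via `‖f‖ = ‖|f|^t‖_{L^{p/t}}^{1/t}`.) -/
def vLpNorm (p : Rn n → ℝ≥0∞) (g : Rn n → ℝ≥0∞) : ℝ≥0∞ :=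
  sInf {lam : ℝ≥0∞ | modularVE p (fun x => g x / lam) ≤ 1}

/-- A variable exponent: a measurable function `p : ℝ^n → (0,∞]` with `p⁻ = ess inf p > 0`. -/
def IsVarExp (p : Rn n → ℝ≥0∞) : Prop :=
  Measurable p ∧ (∀ x, 0 < p x) ∧ 0 < essInf p (volume : Measure (Rn n))

/-- Local log-Hölder continuity of `g : ℝ^n → ℝ`. -/
def LocLogHolder (g : Rn n → ℝ) : Prop :=
  ∃ c > 0, ∀ x y : Rn n, |g x - g y| ≤ c / Real.log (Real.exp 1 + (dist x y)⁻¹)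

/-- Log-Hölder decay of `g` at infinity, with limit value `gInf` and constant `c`. -/
def LogDecay (g : Rn n → ℝ) (gInf c : ℝ) : Prop :=
  ∀ x : Rn n, |g x - gInf| ≤ c / Real.log (Real.exp 1 + ‖x‖)

/-- `p ∈ P^log(ℝ^n)`, with prescribed limit value `pinvInf = 1/p_∞` of `1/p` at infinity. -/
def IsPLogWith (p : Rn n → ℝ≥0∞) (pinvInf : ℝ) : Prop :=
  IsVarExp p ∧ LocLogHolder (fun x => (p x)⁻¹.toReal) ∧
    ∃ c > 0, LogDecay (fun x => (p x)⁻¹.toReal) pinvInf c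

/-- `p ∈ P^log(ℝ^n)`. -/
def IsPLog (p : Rn n → ℝ≥0∞) : Prop := ∃ pinvInf : ℝ, IsPLogWith p pinvInf

/-- The Morrey quasi-norm `‖·‖_{M^{u(·)}_{p(·)}(ℝ^n)}` of a `[0,∞]`-valued function:
`sup_{x, r>0} r^{n(1/u(x) - 1/p(x))} ‖f‖_{L^{p(·)}(B_r(x))}`. -/
def morreyNorm (p u : Rn n → ℝ≥0∞) (g : Rn n → ℝ≥0∞) : ℝ≥0∞ :=
  ⨆ (x : Rn n) (r : ℝ) (_ : 0 < r),
    ENNReal.ofReal (r ^ ((n : ℝ) * ((u x)⁻¹.toReal - (p x)⁻¹.toReal))) *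
      vLpNorm p ((Metric.ball x r).indicator g)

/-- The `ℓ^q` (quasi-)norm of a sequence in `[0,∞]`, with the usual modification for `q = ∞`. -/
def lqNorm (q : ℝ≥0∞) (a : ℕ → ℝ≥0∞) : ℝ≥0∞ :=
  if q = ∞ then ⨆ ν, a ν else (∑' ν, a ν ^ q.toReal) ^ (1 / q.toReal)

/-- The vector-valued Morrey quasi-norm `‖(f_ν)_ν‖_{M^{u(·)}_{p(·)}(ℓ^{q(·)})}`. -/
def morreySeqNorm (p u q : Rn n → ℝ≥0∞) (f : ℕ → Rn n → ℝ≥0∞) : ℝ≥0∞ :=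
  morreyNorm p u (fun x => lqNorm (q x) (fun ν => f ν x))

/-- The kernel `η_{ν,m}(x) = 2^{νn} (1 + 2^ν |x|)^{-m}`. -/
def etaK (ν : ℕ) (m : ℝ) (x : Rn n) : ℝ≥0∞ :=
  ENNReal.ofReal ((2 : ℝ) ^ (ν * n) * (1 + 2 ^ ν * ‖x‖) ^ (-m))

/-- Convolution of `[0,∞]`-valued functions. -/
def lconv (f g : Rn n → ℝ≥0∞) (x : Rn n) : ℝ≥0∞ := ∫⁻ y, f (x - y) * g y

/-- The constant `c_{p,u} = max(0, sup_x (1/p(x) - 1/u(x)) - 1/p_∞)`. -/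
def cpu (p u : Rn n → ℝ≥0∞) (pinvInf : ℝ) : ℝ :=
  max 0 ((⨆ x : Rn n, ((p x)⁻¹.toReal - (u x)⁻¹.toReal)) - pinvInf)


/-- Average of `f` over the closed ball of radius `2 ^ k` around `x`. -/
def ballAvg (f : Rn n → ℝ≥0∞) (k : ℤ) (x : Rn n) : ℝ≥0∞ :=
  (volume (Metric.closedBall x ((2 : ℝ) ^ k)))⁻¹ *
    ∫⁻ y in Metric.closedBall x ((2 : ℝ) ^ k), f y

/-- The centred maximal function over balls with dyadic radii. -/
def dyMax (f : Rn n → ℝ≥0∞) (x : Rn n) : ℝ≥0∞ := ⨆ k : ℤ, ballAvg f k x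

lemma volume_closedBall_eq (x : Rn n) {r : ℝ} (hr : 0 ≤ r) :
    volume (Metric.closedBall x r) =
      ENNReal.ofReal (r ^ n) * volume (Metric.ball (0 : Rn n) 1) := by
  have := Measure.addHaar_closedBall (volume : Measure (Rn n)) x hr
  simpa using this

lemma volume_unitBall_ne_zero : volume (Metric.ball (0 : Rn n) 1) ≠ 0 :=
  (Metric.measure_ball_pos _ _ one_pos).ne'

lemma volume_unitBall_ne_top : volume (Metric.ball (0 : Rn n) 1) ≠ ∞ :=
  measure_ball_lt_top.ne

lemma volume_closedBall_ne_zero (x : Rn n) {r : ℝ} (hr : 0 < r) :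
    volume (Metric.closedBall x r) ≠ 0 :=
  (Metric.measure_closedBall_pos _ _ hr).ne'

lemma volume_closedBall_ne_top (x : Rn n) (r : ℝ) :
    volume (Metric.closedBall x r) ≠ ∞ :=
  measure_closedBall_lt_top.ne

lemma measurable_ballAvg {f : Rn n → ℝ≥0∞} (hf : Measurable f) (k : ℤ) :
    Measurable (ballAvg f k) := by
  have h2 : (0 : ℝ) ≤ (2 : ℝ) ^ k := by positivity
  have : ballAvg f k = fun x => (ENNReal.ofReal (((2 : ℝ) ^ k) ^ n) *
      volume (Metric.ball (0 : Rn n) 1))⁻¹ *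
      ∫⁻ y, {p : Rn n × Rn n | dist p.2 p.1 ≤ (2 : ℝ) ^ k}.indicator (fun p => f p.2) (x, y) := by
    funext x
    rw [ballAvg, volume_closedBall_eq x h2, ← lintegral_indicator measurableSet_closedBall]
    rfl
  rw [this]
  refine Measurable.const_mul ?_ _
  refine Measurable.lintegral_prod_right' (Measurable.indicator (hf.comp measurable_snd) ?_)
  exact measurableSet_le (measurable_snd.dist measurable_fst) measurable_const

lemma measurable_dyMax {f : Rn n → ℝ≥0∞} (hf : Measurable f) : Measurable (dyMax f) :=
  Measurable.iSup fun k => measurable_ballAvg hf k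

lemma ballAvg_le_dyMax (f : Rn n → ℝ≥0∞) (k : ℤ) (x : Rn n) : ballAvg f k x ≤ dyMax f x :=
  le_iSup (fun k => ballAvg f k x) k

lemma ballAvg_mono {f g : Rn n → ℝ≥0∞} (h : ∀ x, f x ≤ g x) (k : ℤ) (x : Rn n) :
    ballAvg f k x ≤ ballAvg g k x := by
  unfold ballAvg
  gcongr
  exact h _

lemma dyMax_mono {f g : Rn n → ℝ≥0∞} (h : ∀ x, f x ≤ g x) (x : Rn n) :
    dyMax f x ≤ dyMax g x :=
  iSup_mono fun k => ballAvg_mono h k x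

lemma ballAvg_add {f g : Rn n → ℝ≥0∞} (hf : Measurable f) (k : ℤ) (x : Rn n) :
    ballAvg (fun y => f y + g y) k x = ballAvg f k x + ballAvg g k x := by
  unfold ballAvg
  rw [lintegral_add_left hf, mul_add]

lemma dyMax_add_le {f g : Rn n → ℝ≥0∞} (hf : Measurable f) (x : Rn n) :
    dyMax (fun y => f y + g y) x ≤ dyMax f x + dyMax g x := by
  refine iSup_le fun k => ?_
  rw [ballAvg_add hf]
  exact add_le_add (ballAvg_le_dyMax _ _ _) (ballAvg_le_dyMax _ _ _)

lemma ballAvg_const_mul {c : ℝ≥0∞} {f : Rn n → ℝ≥0∞} (hf : Measurable f) (k : ℤ) (x : Rn n) :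
    ballAvg (fun y => c * f y) k x = c * ballAvg f k x := by
  unfold ballAvg
  rw [lintegral_const_mul c hf, mul_left_comm]

lemma ballAvg_const (c : ℝ≥0∞) (k : ℤ) (x : Rn n) :
    ballAvg (fun _ => c) k x = c := by
  have h2 : (0 : ℝ) < (2 : ℝ) ^ k := by positivity
  unfold ballAvg
  rw [setLIntegral_const, mul_comm c, ← mul_assoc, ENNReal.inv_mul_cancel
    (volume_closedBall_ne_zero x h2) (volume_closedBall_ne_top x _), one_mul]

lemma dyMax_const_mul {c : ℝ≥0∞} {f : Rn n → ℝ≥0∞} (hf : Measurable f) (x : Rn n) :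
    dyMax (fun y => c * f y) x = c * dyMax f x := by
  unfold dyMax
  simp_rw [ballAvg_const_mul hf, ENNReal.mul_iSup]

lemma dyMax_le_of_le {c : ℝ≥0∞} {f : Rn n → ℝ≥0∞} (h : ∀ x, f x ≤ c) (x : Rn n) :
    dyMax f x ≤ c :=
  iSup_le fun k => (ballAvg_mono h k x).trans (ballAvg_const c k x).le

lemma dyMax_tsum_le {F : ℕ → Rn n → ℝ≥0∞} (hF : ∀ i, Measurable (F i)) (x : Rn n) :
    dyMax (fun y => ∑' i, F i y) x ≤ ∑' i, dyMax (F i) x := by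
  refine iSup_le fun k => ?_
  unfold ballAvg
  rw [lintegral_tsum fun i => (hF i).aemeasurable, ← ENNReal.tsum_mul_left]
  exact ENNReal.tsum_le_tsum fun i => ballAvg_le_dyMax (F i) k x

/-- Weak type `(1,1)` estimate for the dyadic-radius maximal function. -/
lemma dyMax_weak_type (f : Rn n → ℝ≥0∞) (l : ℝ≥0∞) :
    l * volume {x | l < dyMax f x} ≤ 5 ^ n * ∫⁻ y, f y := by
  set S : ℕ → Set (Rn n) := fun K => {x | ∃ k : ℤ, k ≤ K ∧ l < ballAvg f k x} with hS
  have hU : {x | l < dyMax f x} = ⋃ K, S K := by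
    ext x
    simp only [dyMax, lt_iSup_iff, hS, Set.mem_ofPred_eq, Set.mem_iUnion]
    constructor
    · rintro ⟨k, hk⟩
      exact ⟨k.toNat, k, Int.self_le_toNat k, hk⟩
    · rintro ⟨K, k, -, hk⟩
      exact ⟨k, hk⟩
  have hmono : Monotone S := by
    rintro K L hKL x ⟨k, hk, hx⟩
    exact ⟨k, hk.trans (by exact_mod_cast hKL), hx⟩
  rw [hU, hmono.measure_iUnion, ENNReal.mul_iSup]
  refine iSup_le fun K => ?_
  set t : Set (Rn n × ℤ) := {a | a.2 ≤ K ∧ l < ballAvg f a.2 a.1} with ht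
  obtain ⟨u, hut, hdisj, hcov⟩ := Vitali.exists_disjoint_subfamily_covering_enlargement_closedBall
    t (fun a => a.1) (fun a => (2 : ℝ) ^ a.2) ((2 : ℝ) ^ (K : ℤ))
    (fun a ha => zpow_le_zpow_right₀ one_le_two ha.1) 5 (by norm_num)
  have hcount : u.Countable := by
    refine hdisj.countable_of_nonempty_interior fun a _ => ?_
    have : (0 : ℝ) < (2 : ℝ) ^ a.2 := by positivity
    exact ⟨a.1, Metric.ball_subset_interior_closedBall (Metric.mem_ball_self this)⟩
  have hsub : S K ⊆ ⋃ a ∈ u, Metric.closedBall a.1 (5 * (2 : ℝ) ^ a.2) := by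
    rintro x ⟨k, hk, hx⟩
    obtain ⟨b, hb, hbs⟩ := hcov (x, k) ⟨hk, hx⟩
    refine Set.mem_iUnion₂.2 ⟨b, hb, hbs (Metric.mem_closedBall_self (by positivity))⟩
  calc l * volume (S K)
      ≤ l * ∑' a : u, volume (Metric.closedBall a.1.1 (5 * (2 : ℝ) ^ a.1.2)) := by
        gcongr
        exact (measure_mono hsub).trans (measure_biUnion_le _ hcount _)
    _ = ∑' a : u, 5 ^ n * (l * volume (Metric.closedBall a.1.1 ((2 : ℝ) ^ a.1.2))) := by
        rw [← ENNReal.tsum_mul_left]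
        refine tsum_congr fun a => ?_
        rw [volume_closedBall_eq _ (by positivity), volume_closedBall_eq _ (by positivity), mul_pow,
          ENNReal.ofReal_mul (by positivity), ENNReal.ofReal_pow (by norm_num)]
        have : ENNReal.ofReal 5 = 5 := by norm_num
        rw [this]
        ring
    _ ≤ ∑' a : u, 5 ^ n * ∫⁻ y in Metric.closedBall a.1.1 ((2 : ℝ) ^ a.1.2), f y := by
        refine ENNReal.tsum_le_tsum fun a => ?_
        gcongr
        have h0 : volume (Metric.closedBall a.1.1 ((2 : ℝ) ^ a.1.2)) ≠ 0 :=
          volume_closedBall_ne_zero _ (by positivity)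
        have h1 := (hut a.2).2.le
        unfold ballAvg at h1
        rw [← ENNReal.div_eq_inv_mul] at h1
        exact (ENNReal.le_div_iff_mul_le (Or.inl h0)
          (Or.inl (volume_closedBall_ne_top _ _))).1 h1
    _ = 5 ^ n * ∫⁻ y in ⋃ a ∈ u, Metric.closedBall a.1 ((2 : ℝ) ^ a.2), f y := by
        rw [ENNReal.tsum_mul_left, lintegral_biUnion hcount
          (fun _ _ => measurableSet_closedBall) hdisj]
    _ ≤ 5 ^ n * ∫⁻ y, f y := by
        gcongr
        exact Measure.restrict_le_self

/-- Two-sided geometric series converge in `ℝ≥0∞`. -/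
lemma tsum_int_geometric_ne_top {θ : ℝ≥0∞} (h : θ < 1) : ∑' i : ℤ, θ ^ i.natAbs ≠ ∞ := by
  rw [← Equiv.intEquivNatSumNat.symm.tsum_eq, ENNReal.summable.tsum_sum ENNReal.summable]
  have h1 : ∑' i : ℕ, θ ^ i ≠ ∞ := by
    rw [ENNReal.tsum_geometric]
    simpa [tsub_eq_zero_iff_le] using h
  refine ENNReal.add_ne_top.2 ⟨?_, ?_⟩
  · simpa [Equiv.intEquivNatSumNat] using h1
  · refine ne_top_of_le_ne_top h1 (ENNReal.tsum_le_tsum fun i => ?_)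
    have : (Equiv.intEquivNatSumNat.symm (Sum.inr i)).natAbs = i + 1 := by
      simp [Equiv.intEquivNatSumNat]
    rw [this]
    exact pow_le_pow_right_of_le_one' h.le (Nat.le_succ i)

lemma rpow_le_tsum_layers (a : ℝ≥0∞) {r : ℝ} (hr : 0 < r) :
    a ^ r ≤ ∑' k : ℤ, if (2 : ℝ≥0∞) ^ k < a then ((2 : ℝ≥0∞) ^ (k + 1)) ^ r else 0 := by
  rcases eq_or_ne a 0 with rfl | h0
  · simp [hr]
  rcases eq_or_ne a ∞ with rfl | htop
  · have : (∞ : ℝ≥0∞) = ∑' _ : ℕ, (1 : ℝ≥0∞) := (ENNReal.tsum_const_eq_top_of_ne_zero one_ne_zero).symm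
    refine le_top.trans (this.trans_le ?_)
    refine le_trans (ENNReal.tsum_le_tsum fun i => ?_) (ENNReal.tsum_comp_le_tsum_of_injective
      (f := fun i : ℕ => (i : ℤ)) Nat.cast_injective _)
    have h2 : (2 : ℝ≥0∞) ^ (i : ℤ) < ∞ := by
      rw [zpow_natCast]; exact ENNReal.pow_lt_top (by simp)
    rw [if_pos h2]
    refine ENNReal.one_le_rpow ?_ hr
    have : ((i : ℤ) + 1) = ((i + 1 : ℕ) : ℤ) := by push_cast; rfl
    rw [this, zpow_natCast]
    exact one_le_pow₀ one_le_two
  obtain ⟨k, hk1, hk2⟩ := ENNReal.exists_mem_Ioc_zpow h0 htop ENNReal.one_lt_two ENNReal.ofNat_ne_top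
  refine le_trans ?_ (ENNReal.le_tsum k)
  rw [if_pos hk1]
  gcongr

lemma two_zpow_eq_rpow (k : ℤ) : (2 : ℝ≥0∞) ^ k = (2 : ℝ≥0∞) ^ (k : ℝ) :=
  (ENNReal.rpow_intCast 2 k).symm

lemma two_rpow_lt_two_rpow_iff {s t : ℝ} : (2 : ℝ≥0∞) ^ s < 2 ^ t ↔ s < t := by
  constructor
  · intro h
    by_contra! h'
    exact absurd h (not_lt.2 (ENNReal.rpow_le_rpow_of_exponent_le one_le_two h'))
  · exact fun h => ENNReal.rpow_lt_rpow_of_exponent_lt ENNReal.one_lt_two (by simp) h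

lemma two_rpow_ne_zero (s : ℝ) : (2 : ℝ≥0∞) ^ s ≠ 0 :=
  (ENNReal.rpow_pos (by simp) (by simp)).ne'

lemma two_rpow_ne_top (s : ℝ) : (2 : ℝ≥0∞) ^ s ≠ ∞ :=
  ENNReal.rpow_ne_top_of_ne_zero (by simp) (by simp)

lemma two_rpow_neg_lt_one {s : ℝ} (hs : 0 < s) : (2 : ℝ≥0∞) ^ (-s) < 1 :=
  ENNReal.rpow_lt_one_of_one_lt_of_neg ENNReal.one_lt_two (by linarith)

lemma tsum_layers_le {r : ℝ} (hr : 0 < r) : ∃ C : ℝ≥0∞, C ≠ ∞ ∧ ∀ a : ℝ≥0∞,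
    (∑' k : ℤ, if (2 : ℝ≥0∞) ^ (k - 1 : ℤ) < a then ((2 : ℝ≥0∞) ^ k) ^ r else 0) ≤ C * a ^ r := by
  set θ : ℝ≥0∞ := 2 ^ (-r) with hθ
  have hθ1 : θ < 1 := two_rpow_neg_lt_one hr
  refine ⟨2 ^ r * ∑' i : ℤ, θ ^ i.natAbs,
    ENNReal.mul_ne_top (two_rpow_ne_top r) (tsum_int_geometric_ne_top hθ1), fun a => ?_⟩
  rcases eq_or_ne a 0 with rfl | h0
  · simp
  rcases eq_or_ne a ∞ with rfl | htop
  · rw [ENNReal.top_rpow_of_pos hr, ENNReal.mul_top]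
    · exact le_top
    · refine mul_ne_zero (two_rpow_ne_zero r) ?_
      have : (1 : ℝ≥0∞) ≤ ∑' i : ℤ, θ ^ i.natAbs := by
        simpa using ENNReal.le_tsum (f := fun i : ℤ => θ ^ i.natAbs) 0
      exact (one_pos.trans_le this).ne'
  obtain ⟨j, hj1, hj2⟩ := ENNReal.exists_mem_Ioc_zpow h0 htop ENNReal.one_lt_two ENNReal.ofNat_ne_top
  have key : ∀ k : ℤ, (if (2 : ℝ≥0∞) ^ (k - 1 : ℤ) < a then ((2 : ℝ≥0∞) ^ k) ^ r else 0) ≤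
      2 ^ r * a ^ r * θ ^ (j + 1 - k).natAbs := by
    intro k
    split_ifs with hk
    · have hlt := hk.trans_le hj2
      rw [two_zpow_eq_rpow, two_zpow_eq_rpow, two_rpow_lt_two_rpow_iff] at hlt
      have hkj : k ≤ j + 1 := by
        have : k - 1 < j + 1 := by exact_mod_cast hlt
        omega
      obtain ⟨i, hi⟩ := Int.eq_ofNat_of_zero_le (sub_nonneg.2 hkj)
      rw [hi, Int.natAbs_natCast]
      have hk' : k = j + 1 - i := by omega
      have h1 : ((2 : ℝ≥0∞) ^ k) ^ r = 2 ^ r * ((2 : ℝ≥0∞) ^ j) ^ r * θ ^ i := by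
        rw [hθ, two_zpow_eq_rpow, two_zpow_eq_rpow, ← ENNReal.rpow_natCast, ← ENNReal.rpow_mul,
          ← ENNReal.rpow_mul, ← ENNReal.rpow_mul, ← ENNReal.rpow_add _ _ (by simp) (by simp),
          ← ENNReal.rpow_add _ _ (by simp) (by simp), hk']
        congr 1
        push_cast
        ring
      rw [h1]
      gcongr
    · exact zero_le
  calc _ ≤ ∑' k : ℤ, 2 ^ r * a ^ r * θ ^ (j + 1 - k).natAbs := ENNReal.tsum_le_tsum key
    _ = 2 ^ r * a ^ r * ∑' i : ℤ, θ ^ i.natAbs := by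
        rw [ENNReal.tsum_mul_left]
        congr 1
        exact (Equiv.subLeft (j + 1)).tsum_eq (fun i : ℤ => θ ^ i.natAbs)
    _ = _ := by ring

lemma dyMax_layer (f : Rn n → ℝ≥0∞) (hf : Measurable f) (l : ℝ≥0∞) :
    l * volume {x | 2 * l < dyMax f x} ≤ 5 ^ n * ∫⁻ y, if l < f y then f y else 0 := by
  have hset : MeasurableSet {y | l < f y} := measurableSet_lt measurable_const hf
  have hm : Measurable (fun y => if l < f y then f y else 0) :=
    Measurable.ite hset hf measurable_const
  refine le_trans (mul_le_mul_right (measure_mono fun x hx => ?_) l) (dyMax_weak_type _ l)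
  simp only [Set.mem_ofPred_eq] at hx ⊢
  have h1 : dyMax f x ≤ dyMax (fun y => if l < f y then f y else 0) x + l := by
    refine (dyMax_mono (g := fun y => (if l < f y then f y else 0) + l) (fun y => ?_) x).trans
      ((dyMax_add_le hm x).trans ?_)
    · split_ifs with h
      · exact le_self_add
      · simpa using h
    · gcongr
      exact dyMax_le_of_le (fun _ => le_rfl) x
  have h2 := hx.trans_le h1
  rw [two_mul] at h2
  exact lt_of_add_lt_add_right h2

/-- Strong type estimate for the dyadic-radius maximal function on `L^r`, `1 < r < ∞`. -/
lemma dyMax_strong_type (n : ℕ) {r : ℝ} (hr : 1 < r) : ∃ C : ℝ≥0∞, C ≠ ∞ ∧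
    ∀ f : Rn n → ℝ≥0∞, Measurable f →
      ∫⁻ x, dyMax f x ^ r ≤ C * ∫⁻ x, f x ^ r := by
  obtain ⟨C, hC, hCa⟩ := tsum_layers_le (sub_pos.2 hr)
  have hr0 : 0 < r := one_pos.trans hr
  refine ⟨2 * 2 ^ r * 5 ^ n * C, by finiteness, fun f hf => ?_⟩
  have hM := measurable_dyMax hf
  have hset : ∀ k : ℤ, MeasurableSet {x | (2 : ℝ≥0∞) ^ k < dyMax f x} := fun k =>
    measurableSet_lt measurable_const hM
  have hset' : ∀ k : ℤ, MeasurableSet {x | (2 : ℝ≥0∞) ^ k < f x} := fun k =>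
    measurableSet_lt measurable_const hf
  have hlayer : ∀ k : ℤ, ((2 : ℝ≥0∞) ^ (k + 1)) ^ r * volume {x | (2 : ℝ≥0∞) ^ k < dyMax f x} ≤
      2 * 2 ^ r * 5 ^ n * ∫⁻ y, ((2 : ℝ≥0∞) ^ k) ^ (r - 1) *
        if (2 : ℝ≥0∞) ^ (k - 1) < f y then f y else 0 := by
    intro k
    have h2 : (2 : ℝ≥0∞) * 2 ^ (k - 1) = 2 ^ k := by
      rw [two_zpow_eq_rpow, two_zpow_eq_rpow]
      nth_rewrite 1 [← ENNReal.rpow_one 2]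
      rw [← ENNReal.rpow_add _ _ (by simp) (by simp)]
      congr 1
      push_cast
      ring
    have h3 := dyMax_layer f hf (2 ^ (k - 1))
    rw [h2] at h3
    rw [lintegral_const_mul]
    swap
    · exact Measurable.ite (hset' _) hf measurable_const
    have h4 : ((2 : ℝ≥0∞) ^ (k + 1)) ^ r = 2 * 2 ^ r * ((2 : ℝ≥0∞) ^ k) ^ (r - 1) * 2 ^ (k - 1) := by
      rw [two_zpow_eq_rpow, two_zpow_eq_rpow, two_zpow_eq_rpow, ← ENNReal.rpow_mul,
        ← ENNReal.rpow_mul]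
      nth_rewrite 2 [← ENNReal.rpow_one 2]
      rw [← ENNReal.rpow_add _ _ (by simp) (by simp), ← ENNReal.rpow_add _ _ (by simp) (by simp),
          ← ENNReal.rpow_add _ _ (by simp) (by simp)]
      congr 1
      push_cast
      ring
    calc _ = 2 * 2 ^ r * ((2 : ℝ≥0∞) ^ k) ^ (r - 1) *
          (2 ^ (k - 1) * volume {x | (2 : ℝ≥0∞) ^ k < dyMax f x}) := by rw [h4]; ring
      _ ≤ 2 * 2 ^ r * ((2 : ℝ≥0∞) ^ k) ^ (r - 1) *
          (5 ^ n * ∫⁻ y, if (2 : ℝ≥0∞) ^ (k - 1) < f y then f y else 0) := by gcongr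
      _ = _ := by ring
  calc ∫⁻ x, dyMax f x ^ r
      ≤ ∫⁻ x, ∑' k : ℤ, {x | (2 : ℝ≥0∞) ^ k < dyMax f x}.indicator
          (fun _ => ((2 : ℝ≥0∞) ^ (k + 1)) ^ r) x := by
        gcongr with x
        refine (rpow_le_tsum_layers _ hr0).trans (le_of_eq (tsum_congr fun k => ?_))
        simp [Set.indicator_apply]
    _ = ∑' k : ℤ, ((2 : ℝ≥0∞) ^ (k + 1)) ^ r * volume {x | (2 : ℝ≥0∞) ^ k < dyMax f x} := by
        rw [lintegral_tsum fun k => (measurable_const.indicator (hset k)).aemeasurable]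
        simp_rw [lintegral_indicator_const (hset _)]
    _ ≤ ∑' k : ℤ, 2 * 2 ^ r * 5 ^ n * ∫⁻ y, ((2 : ℝ≥0∞) ^ k) ^ (r - 1) *
        if (2 : ℝ≥0∞) ^ (k - 1) < f y then f y else 0 := ENNReal.tsum_le_tsum hlayer
    _ = 2 * 2 ^ r * 5 ^ n * ∫⁻ y, f y *
          ∑' k : ℤ, if (2 : ℝ≥0∞) ^ (k - 1) < f y then ((2 : ℝ≥0∞) ^ k) ^ (r - 1) else 0 := by
        rw [ENNReal.tsum_mul_left, ← lintegral_tsum fun k => (Measurable.const_mul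
          (Measurable.ite (hset' _) hf measurable_const) _).aemeasurable]
        simp_rw [← ENNReal.tsum_mul_left]
        congr 1
        refine lintegral_congr fun y => tsum_congr fun k => ?_
        split_ifs <;> simp [mul_comm]
    _ ≤ 2 * 2 ^ r * 5 ^ n * ∫⁻ y, C * f y ^ r := by
        refine mul_le_mul_right (lintegral_mono fun y => ?_) _
        calc _ ≤ f y * (C * f y ^ (r - 1)) := by gcongr; exact hCa _
          _ = C * (f y ^ (1 : ℝ) * f y ^ (r - 1)) := by rw [ENNReal.rpow_one]; ring
          _ = C * f y ^ r := by
            rw [← ENNReal.rpow_add_of_nonneg _ _ zero_le_one (by linarith)]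
            congr 2
            ring
    _ = _ := by rw [lintegral_const_mul _ (hf.pow_const _)]; ring

/-- A real-valued exponent with values in `[a, b] ⊆ (1, ∞)` that is locally log-Hölder
continuous with constant `c`. -/
structure LocExp (P : Rn n → ℝ) (a b c : ℝ) : Prop where
  meas : Measurable P
  one_lt : 1 < a
  lower : ∀ x, a ≤ P x
  upper : ∀ x, P x ≤ b
  loc : ∀ (x y : Rn n) (R : ℝ), 0 < R → dist x y ≤ R →
    |P x - P y| * Real.log (Real.exp 1 + R⁻¹) ≤ c

/-- A locally log-Hölder continuous exponent with logarithmic decay towards `Pi` at infinity. -/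
structure DecExp (P : Rn n → ℝ) (Pi a b c : ℝ) : Prop extends LocExp P a b c where
  inf_lower : a ≤ Pi
  inf_upper : Pi ≤ b
  decay : ∀ x : Rn n, |P x - Pi| * Real.log (Real.exp 1 + ‖x‖) ≤ c

/-- The integrable weight `(e + |x|)^{-(n+1)}`. -/
def decWeight (x : Rn n) : ℝ≥0∞ := (ENNReal.ofReal (Real.exp 1 + ‖x‖)) ^ (-((n : ℝ) + 1))

lemma one_le_exp_add {s : ℝ} (hs : 0 ≤ s) : 1 ≤ Real.exp 1 + s := by
  have : (1 : ℝ) ≤ Real.exp 1 := Real.one_le_exp zero_le_one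
  linarith

lemma measurable_decWeight : Measurable (decWeight : Rn n → ℝ≥0∞) := by
  unfold decWeight
  fun_prop

lemma lintegral_decWeight_ne_top : ∫⁻ x : Rn n, decWeight x ≠ ∞ := by
  have h : ((Module.finrank ℝ (Rn n) : ℕ) : ℝ) < (n : ℝ) + 1 := by simp
  refine ne_top_of_le_ne_top (finite_integral_one_add_norm (μ := (volume : Measure (Rn n))) h).ne
    (lintegral_mono fun x => ?_)
  have h1 : 0 < 1 + ‖x‖ := by positivity
  have h2 : 0 < Real.exp 1 + ‖x‖ := by positivity
  unfold decWeight
  rw [ENNReal.ofReal_rpow_of_pos h2]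
  refine ENNReal.ofReal_le_ofReal (Real.rpow_le_rpow_of_nonpos h1 ?_ ?_)
  · have : (1 : ℝ) ≤ Real.exp 1 := Real.one_le_exp zero_le_one
    linarith
  · linarith [(n.cast_nonneg : (0 : ℝ) ≤ n)]

lemma rpow_le_rpow_abs {t Z : ℝ≥0∞} (h1 : t ≤ Z) (h2 : t⁻¹ ≤ Z) (e : ℝ) :
    t ^ e ≤ Z ^ |e| := by
  rcases le_total 0 e with he | he
  · rw [abs_of_nonneg he]
    gcongr
  · rw [abs_of_nonpos he]
    have : t ^ e = (t⁻¹) ^ (-e) := by rw [ENNReal.inv_rpow, ENNReal.rpow_neg, inv_inv]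
    rw [this]
    exact ENNReal.rpow_le_rpow h2 (by linarith)

lemma rpow_le_of_mul_log_le {t C₀ : ℝ≥0∞} {X K B c e : ℝ} (hC₀ : 1 ≤ C₀) (hX : 1 ≤ X) (hK : 0 ≤ K)
    (h1 : t ≤ C₀ * ENNReal.ofReal X ^ K) (h2 : t⁻¹ ≤ C₀ * ENNReal.ofReal X ^ K)
    (hB : |e| ≤ B) (hc : |e| * Real.log X ≤ c) :
    t ^ e ≤ C₀ ^ B * ENNReal.ofReal (Real.exp (K * c)) := by
  have hX0 : 0 < X := by linarith
  refine (rpow_le_rpow_abs h1 h2 e).trans ?_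
  rw [ENNReal.mul_rpow_of_nonneg _ _ (abs_nonneg e)]
  gcongr
  rw [← ENNReal.rpow_mul, ENNReal.ofReal_rpow_of_pos hX0]
  refine ENNReal.ofReal_le_ofReal ?_
  rw [Real.rpow_def_of_pos hX0]
  refine Real.exp_le_exp.2 ?_
  nlinarith [mul_le_mul_of_nonneg_left hc hK]

lemma rpow_le_mul_rpow_of_sub {t C : ℝ≥0∞} (ht0 : t ≠ 0) (ht : t ≠ ∞) {s r : ℝ}
    (h : t ^ (s - r) ≤ C) : t ^ s ≤ C * t ^ r := by
  calc t ^ s = t ^ (s - r) * t ^ r := by rw [← ENNReal.rpow_add _ _ ht0 ht]; congr 1; ring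
    _ ≤ C * t ^ r := by gcongr

namespace LocExp

variable {P : Rn n → ℝ} {a b c : ℝ}

lemma pos (h : LocExp P a b c) (x : Rn n) : 0 < P x := by
  linarith [h.one_lt, h.lower x]

lemma one_lt' (h : LocExp P a b c) (x : Rn n) : 1 < P x := by
  linarith [h.one_lt, h.lower x]

lemma b_pos (h : LocExp P a b c) : 0 < b := (h.pos 0).trans_le (h.upper 0)

lemma abs_sub_le (h : LocExp P a b c) (x y : Rn n) : |P x - P y| ≤ b := by
  have := h.pos x
  have := h.pos y
  have := h.upper x
  have := h.upper y
  rw [abs_le]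
  constructor <;> linarith

lemma rpow_comparison (h : LocExp P a b c) {C₀ : ℝ≥0∞} (hC₀ : 1 ≤ C₀) {K : ℝ}
    (hK : 0 ≤ K) {t : ℝ≥0∞} {x y : Rn n} {R : ℝ} (hR : 0 < R) (hxy : dist x y ≤ R)
    (h1 : t ≤ C₀ * ENNReal.ofReal (Real.exp 1 + R⁻¹) ^ K)
    (h2 : t⁻¹ ≤ C₀ * ENNReal.ofReal (Real.exp 1 + R⁻¹) ^ K) :
    t ^ (P x - P y) ≤ C₀ ^ b * ENNReal.ofReal (Real.exp (K * c)) :=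
  rpow_le_of_mul_log_le hC₀ (one_le_exp_add (by positivity)) hK h1 h2 (h.abs_sub_le x y)
    (h.loc x y R hR hxy)

end LocExp

namespace DecExp

variable {P : Rn n → ℝ} {Pi a b c : ℝ}

lemma one_lt_inf (h : DecExp P Pi a b c) : 1 < Pi := h.one_lt.trans_le h.inf_lower

lemma abs_sub_inf_le (h : DecExp P Pi a b c) (x : Rn n) : |P x - Pi| ≤ b := by
  have := h.pos x
  have := h.one_lt_inf
  have := h.upper x
  have := h.inf_upper
  rw [abs_le]
  constructor <;> linarith

/-- On values in `[0, 1]` the powers `P x` and `Pi` agree up to a constant and an integrable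
error. -/
lemma rpow_le_rpow_inf (h : DecExp P Pi a b c) {t : ℝ≥0∞} (ht : t ≤ 1) (x : Rn n) :
    t ^ P x ≤ ENNReal.ofReal (Real.exp ((n + 1) * c)) * t ^ Pi + decWeight x ∧
    t ^ Pi ≤ ENNReal.ofReal (Real.exp ((n + 1) * c)) * t ^ P x + decWeight x := by
  have hn : (0 : ℝ) ≤ n + 1 := by positivity
  have hX : 1 ≤ Real.exp 1 + ‖x‖ := one_le_exp_add (norm_nonneg x)
  rcases le_total t (decWeight x) with hlt | hge
  · constructor
    · exact (ENNReal.rpow_le_self_of_le_one ht (h.one_lt' x).le).trans (hlt.trans le_add_self)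
    · exact (ENNReal.rpow_le_self_of_le_one ht h.one_lt_inf.le).trans (hlt.trans le_add_self)
  · have hinv : t⁻¹ ≤ 1 * ENNReal.ofReal (Real.exp 1 + ‖x‖) ^ ((n : ℝ) + 1) := by
      rw [one_mul, ENNReal.inv_le_iff_inv_le, ← ENNReal.rpow_neg]
      exact hge
    have ht0 : t ≠ 0 := by
      rintro rfl
      rw [ENNReal.inv_zero, one_mul] at hinv
      exact absurd hinv (not_le.2 (ENNReal.rpow_lt_top_of_nonneg hn ENNReal.ofReal_ne_top))
    have ht' : t ≤ 1 * ENNReal.ofReal (Real.exp 1 + ‖x‖) ^ ((n : ℝ) + 1) := by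
      rw [one_mul]
      refine ht.trans ?_
      have := ENNReal.rpow_le_rpow (ENNReal.one_le_ofReal.2 hX) hn
      rwa [ENNReal.one_rpow] at this
    have htop : t ≠ ∞ := ne_top_of_le_ne_top one_ne_top ht
    have key : ∀ e : ℝ, |e| ≤ b → |e| * Real.log (Real.exp 1 + ‖x‖) ≤ c →
        t ^ e ≤ ENNReal.ofReal (Real.exp ((n + 1) * c)) := by
      intro e he1 he2
      have := rpow_le_of_mul_log_le le_rfl hX hn ht' hinv he1 he2
      rwa [ENNReal.one_rpow, one_mul] at this
    constructor
    · exact (rpow_le_mul_rpow_of_sub ht0 htop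
        (key _ (h.abs_sub_inf_le x) (h.decay x))).trans le_self_add
    · refine (rpow_le_mul_rpow_of_sub ht0 htop (key _ ?_ ?_)).trans le_self_add
      · rw [abs_sub_comm]; exact h.abs_sub_inf_le x
      · rw [abs_sub_comm]; exact h.decay x

/-- The maximal function is bounded on the part of a function that is at most one. -/
lemma dyMax_modular_le_one (h : DecExp P Pi a b c) : ∃ C : ℝ≥0∞, C ≠ ∞ ∧
    ∀ f : Rn n → ℝ≥0∞, Measurable f → (∀ x, f x ≤ 1) → ∫⁻ x, f x ^ P x ≤ 1 →
      ∫⁻ x, dyMax f x ^ P x ≤ C := by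
  obtain ⟨C, hC, hM⟩ := dyMax_strong_type n h.one_lt_inf
  set D := ENNReal.ofReal (Real.exp ((n + 1) * c)) with hD
  have hDtop : D ≠ ∞ := ENNReal.ofReal_ne_top
  set I := ∫⁻ x : Rn n, decWeight x with hI
  have hItop : I ≠ ∞ := lintegral_decWeight_ne_top
  refine ⟨D * (C * (D + I)) + I, by finiteness, fun f hf hf1 hmod => ?_⟩
  have hfm : Measurable fun x => f x ^ P x := hf.pow h.meas
  calc ∫⁻ x, dyMax f x ^ P x
      ≤ ∫⁻ x, (D * dyMax f x ^ Pi + decWeight x) :=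
        lintegral_mono fun x => (h.rpow_le_rpow_inf (dyMax_le_of_le hf1 x) x).1
    _ = D * (∫⁻ x, dyMax f x ^ Pi) + I := by
        rw [lintegral_add_right _ measurable_decWeight,
          lintegral_const_mul _ ((measurable_dyMax hf).pow_const _)]
    _ ≤ D * (C * ∫⁻ x, f x ^ Pi) + I := by
        gcongr
        exact hM f hf
    _ ≤ D * (C * ∫⁻ x, (D * f x ^ P x + decWeight x)) + I := by
        gcongr with x
        exact (h.rpow_le_rpow_inf (hf1 x) x).2
    _ = D * (C * (D * (∫⁻ x, f x ^ P x) + I)) + I := by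
        rw [lintegral_add_right _ measurable_decWeight, lintegral_const_mul _ hfm]
    _ ≤ D * (C * (D * 1 + I)) + I := by gcongr
    _ = _ := by rw [mul_one]

end DecExp

lemma iSup_rpow_le {ι : Sort*} {A : ι → ℝ≥0∞} {s : ℝ} (hs : 0 < s) {Z : ℝ≥0∞}
    (h : ∀ i, A i ^ s ≤ Z) : (⨆ i, A i) ^ s ≤ Z := by
  have : (⨆ i, A i) ≤ Z ^ s⁻¹ :=
    iSup_le fun i => (ENNReal.le_rpow_inv_iff hs).2 (h i)
  exact (ENNReal.le_rpow_inv_iff hs).1 this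

lemma le_add_rpow_mul_rpow {f t : ℝ≥0∞} {s : ℝ} (hs : 1 ≤ s) (ht0 : t ≠ 0) (ht : t ≠ ∞) :
    f ≤ t + f ^ s * t ^ (1 - s) := by
  rcases le_total f t with h | h
  · exact h.trans le_self_add
  · refine le_trans ?_ le_add_self
    have hf0 : f ≠ 0 := fun h0 => ht0 (le_zero_iff.1 (h0 ▸ h))
    rcases eq_or_ne f ∞ with rfl | hf
    · rw [ENNReal.top_rpow_of_pos (by linarith), ENNReal.top_mul]
      exact (ENNReal.rpow_pos (pos_iff_ne_zero.2 ht0) ht).ne'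
    · calc f = f ^ s * f ^ (1 - s) := by
            rw [← ENNReal.rpow_add _ _ hf0 hf, add_sub_cancel, ENNReal.rpow_one]
        _ ≤ f ^ s * t ^ (1 - s) := by
            refine mul_le_mul_right ?_ _
            rw [← neg_sub, ENNReal.rpow_neg, ENNReal.rpow_neg]
            exact ENNReal.inv_le_inv.2 (ENNReal.rpow_le_rpow h (by linarith))

namespace LocExp

variable {P : Rn n → ℝ} {a b c : ℝ}

lemma ballAvg_rpow_le (h : LocExp P a b c) : ∃ C : ℝ≥0∞, C ≠ ∞ ∧
    ∀ f : Rn n → ℝ≥0∞, Measurable f → (∀ x, f x = 0 ∨ 1 ≤ f x) → ∫⁻ x, f x ^ P x ≤ 1 →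
      ∀ (k : ℤ) (x : Rn n),
        ballAvg f k x ^ (P x / a) ≤ C * ballAvg (fun y => f y ^ (P y / a)) k x := by
  have ha : 0 < a := one_pos.trans h.one_lt
  set V := volume (Metric.ball (0 : Rn n) 1) with hV
  have hVi : V⁻¹ ≠ ∞ := ENNReal.inv_ne_top.2 volume_unitBall_ne_zero
  set C₀ : ℝ≥0∞ := 2 + V⁻¹ with hC₀
  have hC₀1 : 1 ≤ C₀ := one_le_two.trans le_self_add
  have hC₀t : C₀ ≠ ∞ := by finiteness
  set C₁ : ℝ≥0∞ := (C₀ ^ b * ENNReal.ofReal (Real.exp (n * c))) ^ a⁻¹ with hC₁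
  have hC₁t : C₁ ≠ ∞ := by
    have := h.b_pos
    finiteness
  refine ⟨1 + 2 ^ (b / a) * C₁, by finiteness, fun f hf hf1 hmod k x => ?_⟩
  have hs1 : ∀ y, 1 ≤ P y / a := fun y => (one_le_div ha).2 (h.lower y)
  have hfpow : ∀ (y : Rn n) (e : ℝ), 1 ≤ e → f y ≤ f y ^ e := by
    intro y e he
    rcases hf1 y with h0 | h1
    · rw [h0]; exact zero_le
    · exact ENNReal.le_rpow_self_of_one_le h1 he
  set A := ballAvg f k x with hA
  set W := ballAvg (fun y => f y ^ (P y / a)) k x with hW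
  have hAW : A ≤ W := ballAvg_mono (fun y => hfpow y _ (hs1 y)) k x
  rcases le_total A 1 with hA1 | hA1
  · exact (ENNReal.rpow_le_self_of_le_one hA1 (hs1 x)).trans
      (hAW.trans (le_mul_of_one_le_left zero_le le_self_add))
  set R : ℝ := (2 : ℝ) ^ k with hR
  have hR0 : 0 < R := by positivity
  have hAle : A ≤ V⁻¹ * ENNReal.ofReal (Real.exp 1 + R⁻¹) ^ (n : ℝ) := by
    have h1 : ∫⁻ y in Metric.closedBall x R, f y ≤ 1 :=
      (setLIntegral_le_lintegral _ _).trans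
        ((lintegral_mono fun y => hfpow y _ (h.one_lt' y).le).trans hmod)
    calc A ≤ (volume (Metric.closedBall x R))⁻¹ * 1 := by
          rw [hA]; unfold ballAvg; gcongr
      _ = V⁻¹ * ENNReal.ofReal (R⁻¹) ^ (n : ℝ) := by
          rw [mul_one, volume_closedBall_eq x hR0.le, ENNReal.mul_inv
            (Or.inr volume_unitBall_ne_top) (Or.inl ENNReal.ofReal_ne_top), mul_comm,
            ENNReal.rpow_natCast, ENNReal.ofReal_inv_of_pos hR0, ENNReal.ofReal_pow hR0.le,
            ENNReal.inv_pow]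
      _ ≤ _ := by
          gcongr
          linarith [Real.exp_pos 1]
  have hAt : A ≠ ∞ := ne_top_of_le_ne_top (by finiteness) hAle
  have hA0 : A ≠ 0 := (one_pos.trans_le hA1).ne'
  set t := A / 2 with ht
  have ht0 : t ≠ 0 := (ENNReal.div_pos hA0 (by simp)).ne'
  have htt : t ≠ ∞ := ENNReal.div_ne_top hAt (by simp)
  have hAtt : A = t + t := (ENNReal.add_halves A).symm
  have ht1 : t ≤ C₀ * ENNReal.ofReal (Real.exp 1 + R⁻¹) ^ (n : ℝ) := by
    refine (ENNReal.half_le_self.trans hAle).trans ?_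
    gcongr
    exact le_add_self
  have ht2 : t⁻¹ ≤ C₀ * ENNReal.ofReal (Real.exp 1 + R⁻¹) ^ (n : ℝ) := by
    have h1 : t⁻¹ ≤ 2 := by
      rw [ht, ENNReal.inv_div (by simp) (by simp)]
      exact ENNReal.div_le_of_le_mul (le_mul_of_one_le_right zero_le hA1)
    have h2 : (1 : ℝ≥0∞) ≤ ENNReal.ofReal (Real.exp 1 + R⁻¹) ^ (n : ℝ) := by
      have := ENNReal.rpow_le_rpow (ENNReal.one_le_ofReal.2 (one_le_exp_add
        (inv_nonneg.2 hR0.le))) (n.cast_nonneg : (0 : ℝ) ≤ n)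
      rwa [ENNReal.one_rpow] at this
    exact h1.trans ((le_mul_of_one_le_right zero_le h2).trans (mul_le_mul_left le_self_add _))
  have hcomp : ∀ y ∈ Metric.closedBall x R, f y ≤ t + C₁ * t ^ (1 - P x / a) * f y ^ (P y / a) := by
    intro y hy
    refine (le_add_rpow_mul_rpow (hs1 y) ht0 htt).trans ?_
    rw [mul_comm (f y ^ (P y / a))]
    gcongr
    refine rpow_le_mul_rpow_of_sub ht0 htt ?_
    have hxy : dist x y ≤ R := by rw [dist_comm]; exact hy
    have h1 := h.rpow_comparison hC₀1 n.cast_nonneg hR0 hxy ht1 ht2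
    have h2 := ENNReal.rpow_le_rpow h1 (inv_nonneg.2 ha.le)
    rw [← ENNReal.rpow_mul] at h2
    refine le_trans (le_of_eq ?_) h2
    congr 1
    field_simp
    ring
  have hmain : A ≤ t + C₁ * t ^ (1 - P x / a) * W := by
    have hm : Measurable fun y => f y ^ (P y / a) := hf.pow (h.meas.div_const a)
    calc A ≤ ballAvg (fun y => t + C₁ * t ^ (1 - P x / a) * f y ^ (P y / a)) k x := by
          rw [hA]; unfold ballAvg
          exact mul_le_mul_right (setLIntegral_mono' Metric.isClosed_closedBall.measurableSet
            hcomp) _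
      _ = _ := by
          rw [ballAvg_add measurable_const, ballAvg_const, ballAvg_const_mul hm]
  have hmain' : t ≤ C₁ * t ^ (1 - P x / a) * W := by
    rw [hAtt] at hmain
    exact (ENNReal.add_le_add_iff_left htt).1 hmain
  have hts : t ^ (P x / a) ≤ C₁ * W := by
    calc t ^ (P x / a) = t * t ^ (P x / a - 1) := by
          nth_rewrite 2 [← ENNReal.rpow_one t]
          rw [← ENNReal.rpow_add _ _ ht0 htt]; congr 1; ring
      _ ≤ C₁ * t ^ (1 - P x / a) * W * t ^ (P x / a - 1) := by gcongr
      _ = C₁ * W * (t ^ (1 - P x / a) * t ^ (P x / a - 1)) := by ring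
      _ = C₁ * W := by
          rw [← ENNReal.rpow_add _ _ ht0 htt]; simp
  calc A ^ (P x / a) = 2 ^ (P x / a) * t ^ (P x / a) := by
        rw [← ENNReal.mul_rpow_of_nonneg _ _ (by linarith [hs1 x]), hAtt, two_mul]
    _ ≤ 2 ^ (b / a) * (C₁ * W) := by
        gcongr
        · exact one_le_two
        · exact h.upper x
    _ = (2 ^ (b / a) * C₁) * W := by ring
    _ ≤ _ := by gcongr; exact le_add_self

/-- The maximal function is bounded on functions without values in `(0, 1)`. -/
lemma dyMax_modular_one_le (h : LocExp P a b c) : ∃ C : ℝ≥0∞, C ≠ ∞ ∧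
    ∀ f : Rn n → ℝ≥0∞, Measurable f → (∀ x, f x = 0 ∨ 1 ≤ f x) → ∫⁻ x, f x ^ P x ≤ 1 →
      ∫⁻ x, dyMax f x ^ P x ≤ C := by
  obtain ⟨C, hC, hb⟩ := h.ballAvg_rpow_le
  obtain ⟨D, hD, hM⟩ := dyMax_strong_type n h.one_lt
  have ha : 0 < a := one_pos.trans h.one_lt
  refine ⟨C ^ a * D, by finiteness, fun f hf hf1 hmod => ?_⟩
  have hm : Measurable fun y => f y ^ (P y / a) := hf.pow (h.meas.div_const a)
  have hpt : ∀ x, dyMax f x ^ P x ≤ C ^ a * dyMax (fun y => f y ^ (P y / a)) x ^ a := by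
    intro x
    have h1 : dyMax f x ^ (P x / a) ≤ C * dyMax (fun y => f y ^ (P y / a)) x :=
      iSup_rpow_le (div_pos (h.pos x) ha) fun k => (hb f hf hf1 hmod k x).trans
        (mul_le_mul_right (ballAvg_le_dyMax _ k x) C)
    have h2 := ENNReal.rpow_le_rpow h1 ha.le
    rwa [← ENNReal.rpow_mul, div_mul_cancel₀ _ ha.ne', ENNReal.mul_rpow_of_nonneg _ _ ha.le] at h2
  calc ∫⁻ x, dyMax f x ^ P x
      ≤ ∫⁻ x, C ^ a * dyMax (fun y => f y ^ (P y / a)) x ^ a := lintegral_mono hpt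
    _ = C ^ a * ∫⁻ x, dyMax (fun y => f y ^ (P y / a)) x ^ a := by
        rw [lintegral_const_mul _ ((measurable_dyMax hm).pow_const _)]
    _ ≤ C ^ a * (D * ∫⁻ x, (f x ^ (P x / a)) ^ a) := by
        gcongr
        exact hM _ hm
    _ = C ^ a * (D * ∫⁻ x, f x ^ P x) := by
        simp_rw [← ENNReal.rpow_mul, div_mul_cancel₀ _ ha.ne']
    _ ≤ C ^ a * (D * 1) := by gcongr
    _ = C ^ a * D := by rw [mul_one]

lemma add_rpow_le (h : LocExp P a b c) (x : Rn n) (s t : ℝ≥0∞) :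
    (s + t) ^ P x ≤ 2 ^ b * (s ^ P x + t ^ P x) := by
  refine (ENNReal.add_rpow_le_two_rpow_mul_rpow_add_rpow s t (h.pos x).le).trans ?_
  gcongr
  · exact one_le_two
  · exact h.upper x

lemma lintegral_add_rpow_le (h : LocExp P a b c) {f : Rn n → ℝ≥0∞} (hf : Measurable f)
    (g : Rn n → ℝ≥0∞) :
    ∫⁻ x, (f x + g x) ^ P x ≤ 2 ^ b * ((∫⁻ x, f x ^ P x) + ∫⁻ x, g x ^ P x) := by
  rw [← lintegral_add_left (hf.pow h.meas), ← lintegral_const_mul' _ _ (two_rpow_ne_top b)]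
  exact lintegral_mono fun x => h.add_rpow_le x _ _

end LocExp

/-- The maximal function is bounded on variable exponent Lebesgue spaces. -/
lemma DecExp.dyMax_modular {P : Rn n → ℝ} {Pi a b c : ℝ} (h : DecExp P Pi a b c) :
    ∃ C : ℝ≥0∞, C ≠ ∞ ∧ ∀ f : Rn n → ℝ≥0∞, Measurable f → ∫⁻ x, f x ^ P x ≤ 1 →
      ∫⁻ x, dyMax f x ^ P x ≤ C := by
  obtain ⟨C₁, hC₁, h1⟩ := h.dyMax_modular_le_one
  obtain ⟨C₂, hC₂, h2⟩ := h.toLocExp.dyMax_modular_one_le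
  refine ⟨2 ^ b * (C₁ + C₂), by have := two_rpow_ne_top b; finiteness, fun f hf hmod => ?_⟩
  set s : Set (Rn n) := {x | f x ≤ 1} with hs
  have hsm : MeasurableSet s := measurableSet_le hf measurable_const
  have hm1 : Measurable (s.indicator f) := hf.indicator hsm
  have hm2 : Measurable (sᶜ.indicator f) := hf.indicator hsm.compl
  have hle : ∀ t : Set (Rn n), ∫⁻ x, t.indicator f x ^ P x ≤ 1 := fun t =>
    (lintegral_mono fun x => ENNReal.rpow_le_rpow (Set.indicator_le_self t f x)
      (h.pos x).le).trans hmod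
  have hsum : f = fun x => s.indicator f x + sᶜ.indicator f x := by
    funext x
    exact (Set.indicator_self_add_compl_apply s f x).symm
  calc ∫⁻ x, dyMax f x ^ P x
      ≤ ∫⁻ x, (dyMax (s.indicator f) x + dyMax (sᶜ.indicator f) x) ^ P x := by
        refine lintegral_mono fun x => ENNReal.rpow_le_rpow ?_ (h.pos x).le
        nth_rewrite 1 [hsum]
        exact dyMax_add_le hm1 x
    _ ≤ 2 ^ b * ((∫⁻ x, dyMax (s.indicator f) x ^ P x) + ∫⁻ x, dyMax (sᶜ.indicator f) x ^ P x) :=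
        h.lintegral_add_rpow_le (measurable_dyMax hm1) _
    _ ≤ 2 ^ b * (C₁ + C₂) := by
        gcongr
        · refine h1 _ hm1 (fun x => ?_) (hle s)
          by_cases hx : x ∈ s
          · rw [Set.indicator_of_mem hx]; exact hx
          · rw [Set.indicator_of_notMem hx]; exact zero_le
        · refine h2 _ hm2 (fun x => ?_) (hle sᶜ)
          by_cases hx : x ∈ s
          · left; rw [Set.indicator_of_notMem (by simpa using hx)]
          · right
            rw [Set.indicator_of_mem (by simpa using hx)]
            exact (not_le.1 hx).le

lemma measurable_etaK (ν : ℕ) (m : ℝ) : Measurable (etaK ν m : Rn n → ℝ≥0∞) := by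
  unfold etaK
  fun_prop

lemma etaK_sub_comm (ν : ℕ) (m : ℝ) (x y : Rn n) : etaK ν m (x - y) = etaK ν m (y - x) := by
  unfold etaK
  rw [norm_sub_rev]

lemma measurable_lconv {f g : Rn n → ℝ≥0∞} (hf : Measurable f) (hg : Measurable g) :
    Measurable (lconv f g) := by
  have : Measurable fun p : Rn n × Rn n => f (p.1 - p.2) * g p.2 := by fun_prop
  exact this.lintegral_prod_right'

lemma lconv_mono {f g h : Rn n → ℝ≥0∞} (hgh : ∀ x, g x ≤ h x) (x : Rn n) :
    lconv f g x ≤ lconv f h x :=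
  lintegral_mono fun y => mul_le_mul_right (hgh y) _

lemma lconv_add {f g h : Rn n → ℝ≥0∞} (hf : Measurable f) (hg : Measurable g) (x : Rn n) :
    lconv f (fun y => g y + h y) x = lconv f g x + lconv f h x := by
  unfold lconv
  simp_rw [mul_add]
  exact lintegral_add_left (by fun_prop) _

lemma lconv_const_mul {f g : Rn n → ℝ≥0∞} (hf : Measurable f) (hg : Measurable g) (c : ℝ≥0∞)
    (x : Rn n) : lconv f (fun y => c * g y) x = c * lconv f g x := by
  unfold lconv
  rw [← lintegral_const_mul _ (by fun_prop)]
  congr 1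
  funext y
  ring

lemma lintegral_lconv_etaK_mul (ν : ℕ) (m : ℝ) {f g : Rn n → ℝ≥0∞} (hf : Measurable f)
    (hg : Measurable g) :
    ∫⁻ x, lconv (etaK ν m) f x * g x = ∫⁻ x, f x * lconv (etaK ν m) g x := by
  have hk : Measurable (etaK ν m : Rn n → ℝ≥0∞) := measurable_etaK ν m
  unfold lconv
  have h1 : ∀ x, (∫⁻ y, etaK ν m (x - y) * f y) * g x =
      ∫⁻ y, etaK ν m (x - y) * f y * g x := fun x =>
    (lintegral_mul_const _ (by fun_prop)).symm
  have h2 : ∀ y, f y * (∫⁻ x, etaK ν m (y - x) * g x) =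
      ∫⁻ x, etaK ν m (x - y) * f y * g x := by
    intro y
    rw [← lintegral_const_mul _ (by fun_prop)]
    congr 1
    funext x
    rw [etaK_sub_comm ν m y x]
    ring
  simp_rw [h1, h2]
  exact lintegral_lintegral_swap (by fun_prop)

lemma etaK_le_tsum (ν : ℕ) {m : ℝ} (hm : 0 ≤ m) (z : Rn n) :
    etaK ν m z ≤ ∑' j : ℕ, ENNReal.ofReal (2 ^ (ν * n) * 2 ^ (-(j * m))) *
      (Metric.closedBall (0 : Rn n) (2 ^ ((j : ℤ) + 1 - ν))).indicator 1 z := by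
  have hs : 1 ≤ 1 + 2 ^ ν * ‖z‖ := by
    have : 0 ≤ (2 : ℝ) ^ ν * ‖z‖ := by positivity
    linarith
  obtain ⟨j, hj1, hj2⟩ := exists_nat_pow_near hs one_lt_two
  refine le_trans ?_ (ENNReal.le_tsum j)
  have hz : z ∈ Metric.closedBall (0 : Rn n) (2 ^ ((j : ℤ) + 1 - ν)) := by
    rw [mem_closedBall_zero_iff, zpow_sub₀ two_ne_zero, le_div_iff₀ (by positivity)]
    have : (2 : ℝ) ^ ((j : ℤ) + 1) = 2 ^ (j + 1) := by norm_cast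
    rw [this, zpow_natCast]
    linarith
  rw [Set.indicator_of_mem hz, Pi.one_apply, mul_one]
  refine ENNReal.ofReal_le_ofReal ?_
  gcongr
  calc (1 + 2 ^ ν * ‖z‖) ^ (-m) ≤ ((2 : ℝ) ^ j) ^ (-m) :=
        Real.rpow_le_rpow_of_nonpos (by positivity) hj1 (by linarith)
    _ = 2 ^ (-(j * m)) := by
        rw [← Real.rpow_natCast, ← Real.rpow_mul zero_le_two]; congr 1; ring

/-- The kernels `η_{ν,m}` with `m > n` are controlled by the maximal function, uniformly
in `ν`. -/
lemma lconv_etaK_le_dyMax (n : ℕ) {m : ℝ} (hm : n < m) : ∃ C : ℝ≥0∞, C ≠ ∞ ∧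
    ∀ (ν : ℕ) (f : Rn n → ℝ≥0∞), Measurable f → ∀ x, lconv (etaK ν m) f x ≤ C * dyMax f x := by
  have hm0 : 0 ≤ m := (n.cast_nonneg.trans_lt hm).le
  set V := volume (Metric.ball (0 : Rn n) 1) with hV
  have hVt : V ≠ ∞ := volume_unitBall_ne_top
  set θ : ℝ≥0∞ := ENNReal.ofReal (2 ^ (-(m - n))) with hθ
  have hθ1 : θ < 1 := by
    rw [hθ, ← ENNReal.ofReal_one, ENNReal.ofReal_lt_ofReal_iff one_pos]
    exact Real.rpow_lt_one_of_one_lt_of_neg one_lt_two (by linarith)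
  have hsum : ∑' j : ℕ, θ ^ j ≠ ∞ := by
    rw [ENNReal.tsum_geometric]
    simpa [tsub_eq_zero_iff_le] using hθ1
  refine ⟨2 ^ n * V * ∑' j : ℕ, θ ^ j, by finiteness, fun ν f hf x => ?_⟩
  have hterm : ∀ j : ℕ, ∫⁻ y, ENNReal.ofReal (2 ^ (ν * n) * 2 ^ (-(j * m))) *
      (Metric.closedBall (0 : Rn n) (2 ^ ((j : ℤ) + 1 - ν))).indicator 1 (x - y) * f y ≤
      2 ^ n * V * θ ^ j * dyMax f x := by
    intro j
    set k : ℤ := (j : ℤ) + 1 - ν with hk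
    have hR : (0 : ℝ) < 2 ^ k := by positivity
    have h1 : ∀ y, ENNReal.ofReal (2 ^ (ν * n) * 2 ^ (-(j * m))) *
        (Metric.closedBall (0 : Rn n) (2 ^ k)).indicator 1 (x - y) * f y =
        ENNReal.ofReal (2 ^ (ν * n) * 2 ^ (-(j * m))) *
          (Metric.closedBall x (2 ^ k)).indicator f y := by
      intro y
      rw [mul_assoc]
      congr 1
      by_cases hy : y ∈ Metric.closedBall x (2 ^ k)
      · have : x - y ∈ Metric.closedBall (0 : Rn n) (2 ^ k) := by
          rw [mem_closedBall_zero_iff, ← dist_eq_norm, dist_comm]; exact hy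
        rw [Set.indicator_of_mem hy, Set.indicator_of_mem this, Pi.one_apply, one_mul]
      · have : x - y ∉ Metric.closedBall (0 : Rn n) (2 ^ k) := by
          rw [mem_closedBall_zero_iff, ← dist_eq_norm, dist_comm]; exact hy
        rw [Set.indicator_of_notMem hy, Set.indicator_of_notMem this, zero_mul]
    simp_rw [h1]
    rw [lintegral_const_mul _ (hf.indicator Metric.isClosed_closedBall.measurableSet),
      lintegral_indicator Metric.isClosed_closedBall.measurableSet]
    have h2 : ∫⁻ y in Metric.closedBall x (2 ^ k), f y =
        volume (Metric.closedBall x ((2 : ℝ) ^ k)) * ballAvg f k x := by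
      unfold ballAvg
      rw [← mul_assoc, ENNReal.mul_inv_cancel (volume_closedBall_ne_zero x hR)
        (volume_closedBall_ne_top x _), one_mul]
    rw [h2, volume_closedBall_eq x hR.le]
    have h3 : (2 : ℝ) ^ (ν * n) * 2 ^ (-(j * m)) * (2 ^ k) ^ n =
        2 ^ n * (2 ^ (-(m - n))) ^ j := by
      simp only [← Real.rpow_natCast, ← Real.rpow_intCast, ← Real.rpow_mul zero_le_two,
        ← Real.rpow_add two_pos, hk]
      congr 1
      push_cast
      ring
    have h4 : ENNReal.ofReal (2 ^ (ν * n) * 2 ^ (-(j * m))) * ENNReal.ofReal ((2 ^ k) ^ n) =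
        2 ^ n * θ ^ j := by
      rw [← ENNReal.ofReal_mul (by positivity), h3, ENNReal.ofReal_mul (by positivity),
        ENNReal.ofReal_pow (by positivity), ENNReal.ofReal_pow (by positivity)]
      simp [hθ]
    calc _ = ENNReal.ofReal (2 ^ (ν * n) * 2 ^ (-(j * m))) * ENNReal.ofReal ((2 ^ k) ^ n) * V *
          ballAvg f k x := by ring
      _ = 2 ^ n * V * θ ^ j * ballAvg f k x := by rw [h4]; ring
      _ ≤ _ := by gcongr; exact ballAvg_le_dyMax f k x
  calc lconv (etaK ν m) f x
      ≤ ∫⁻ y, ∑' j : ℕ, ENNReal.ofReal (2 ^ (ν * n) * 2 ^ (-(j * m))) *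
          (Metric.closedBall (0 : Rn n) (2 ^ ((j : ℤ) + 1 - ν))).indicator 1 (x - y) * f y := by
        refine lintegral_mono fun y => ?_
        rw [ENNReal.tsum_mul_right]
        exact mul_le_mul_left (etaK_le_tsum ν hm0 (x - y)) _
    _ = ∑' j : ℕ, ∫⁻ y, ENNReal.ofReal (2 ^ (ν * n) * 2 ^ (-(j * m))) *
          (Metric.closedBall (0 : Rn n) (2 ^ ((j : ℤ) + 1 - ν))).indicator 1 (x - y) * f y := by
        refine lintegral_tsum fun j => ?_
        have : Measurable ((Metric.closedBall (0 : Rn n) (2 ^ ((j : ℤ) + 1 - ν))).indicator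
            (1 : Rn n → ℝ≥0∞)) :=
          measurable_one.indicator Metric.isClosed_closedBall.measurableSet
        fun_prop
    _ ≤ ∑' j : ℕ, 2 ^ n * V * θ ^ j * dyMax f x := ENNReal.tsum_le_tsum hterm
    _ = _ := by rw [ENNReal.tsum_mul_right, ENNReal.tsum_mul_left]

section conj

variable {P : Rn n → ℝ} {Pi a b c : ℝ}

lemma conj_antitone {s t : ℝ} (hs : 1 < s) (hst : s ≤ t) :
    Real.conjExponent t ≤ Real.conjExponent s := by
  unfold Real.conjExponent
  rw [div_le_div_iff₀ (by linarith) (by linarith)]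
  nlinarith

lemma one_lt_conj {s : ℝ} (hs : 1 < s) : 1 < Real.conjExponent s := by
  unfold Real.conjExponent
  rw [one_lt_div (by linarith)]
  linarith

lemma abs_conj_sub_le {a s t : ℝ} (ha : 1 < a) (hs : a ≤ s) (ht : a ≤ t) :
    |Real.conjExponent s - Real.conjExponent t| ≤ |s - t| / (a - 1) ^ 2 := by
  have hs1 : 0 < s - 1 := by linarith
  have ht1 : 0 < t - 1 := by linarith
  have : Real.conjExponent s - Real.conjExponent t = (t - s) / ((s - 1) * (t - 1)) := by
    unfold Real.conjExponent
    field_simp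
    ring
  rw [this, abs_div, abs_sub_comm, abs_of_pos (mul_pos hs1 ht1)]
  have : 0 < a - 1 := by linarith
  gcongr
  nlinarith

lemma LocExp.conj (h : LocExp P a b c) : LocExp (fun x => Real.conjExponent (P x))
    (Real.conjExponent b) (Real.conjExponent a) (c / (a - 1) ^ 2) where
  meas := by
    unfold Real.conjExponent
    exact h.meas.div (h.meas.sub_const 1)
  one_lt := one_lt_conj ((h.one_lt' 0).trans_le (h.upper 0))
  lower x := conj_antitone (h.one_lt' x) (h.upper x)
  upper x := conj_antitone h.one_lt (h.lower x)
  loc x y R hR hxy := by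
    have h1 := abs_conj_sub_le h.one_lt (h.lower x) (h.lower y)
    have h2 := h.loc x y R hR hxy
    have h3 : 0 ≤ Real.log (Real.exp 1 + R⁻¹) := Real.log_nonneg (one_le_exp_add (by positivity))
    calc _ ≤ |P x - P y| / (a - 1) ^ 2 * Real.log (Real.exp 1 + R⁻¹) := by gcongr
      _ = |P x - P y| * Real.log (Real.exp 1 + R⁻¹) / (a - 1) ^ 2 := by ring
      _ ≤ _ := by gcongr

lemma DecExp.conj (h : DecExp P Pi a b c) : DecExp (fun x => Real.conjExponent (P x))
    (Real.conjExponent Pi) (Real.conjExponent b) (Real.conjExponent a) (c / (a - 1) ^ 2) where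
  toLocExp := h.toLocExp.conj
  inf_lower := conj_antitone h.one_lt_inf h.inf_upper
  inf_upper := conj_antitone h.one_lt h.inf_lower
  decay x := by
    have h1 := abs_conj_sub_le h.one_lt (h.lower x) h.inf_lower
    have h2 := h.decay x
    have h3 : 0 ≤ Real.log (Real.exp 1 + ‖x‖) := Real.log_nonneg (one_le_exp_add (norm_nonneg x))
    calc _ ≤ |P x - Pi| / (a - 1) ^ 2 * Real.log (Real.exp 1 + ‖x‖) := by gcongr
      _ = |P x - Pi| * Real.log (Real.exp 1 + ‖x‖) / (a - 1) ^ 2 := by ring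
      _ ≤ _ := by gcongr

end conj

lemma ENNReal.mul_le_rpow_add_rpow_conj (s t : ℝ≥0∞) {p : ℝ} (hp : 1 < p) :
    s * t ≤ s ^ p + t ^ Real.conjExponent p := by
  refine (ENNReal.young_inequality s t (Real.HolderConjugate.conjExponent hp)).trans ?_
  refine add_le_add (ENNReal.div_le_of_le_mul ?_) (ENNReal.div_le_of_le_mul ?_)
  · exact le_mul_of_one_le_right zero_le (ENNReal.one_le_ofReal.2 hp.le)
  · exact le_mul_of_one_le_right zero_le (ENNReal.one_le_ofReal.2 (one_lt_conj hp).le)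

lemma ENNReal.tsum_inv_two_pow : ∑' k : ℕ, (2⁻¹ : ℝ≥0∞) ^ k = 2 := by
  rw [ENNReal.tsum_geometric, ENNReal.one_sub_inv_two, inv_inv]

namespace LocExp

variable {P : Rn n → ℝ} {a b c : ℝ}

lemma lintegral_const_mul_rpow_le (h : LocExp P a b c) {K : ℝ≥0∞} (hK : 1 ≤ K) (hKt : K ≠ ∞)
    (f : Rn n → ℝ≥0∞) : ∫⁻ x, (K * f x) ^ P x ≤ K ^ b * ∫⁻ x, f x ^ P x := by
  have := h.b_pos
  rw [← lintegral_const_mul' _ _ (by finiteness)]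
  refine lintegral_mono fun x => ?_
  rw [ENNReal.mul_rpow_of_nonneg _ _ (h.pos x).le]
  exact mul_le_mul_left (ENNReal.rpow_le_rpow_of_exponent_le hK (h.upper x)) _

lemma lintegral_inv_mul_rpow_le (h : LocExp P a b c) {K : ℝ≥0∞} (hK : 1 ≤ K)
    (f : Rn n → ℝ≥0∞) : ∫⁻ x, (K⁻¹ * f x) ^ P x ≤ K⁻¹ * ∫⁻ x, f x ^ P x := by
  have hK1 : K⁻¹ ≤ 1 := ENNReal.inv_le_one.2 hK
  rw [← lintegral_const_mul' _ _ (ne_top_of_le_ne_top one_ne_top hK1)]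
  refine lintegral_mono fun x => ?_
  rw [ENNReal.mul_rpow_of_nonneg _ _ (h.pos x).le]
  exact mul_le_mul_left (ENNReal.rpow_le_self_of_le_one hK1 (h.one_lt' x).le) _

lemma modular_inv_mul_le_one (h : LocExp P a b c) {K : ℝ≥0∞} (hK : 1 ≤ K) (hKt : K ≠ ∞)
    {f : Rn n → ℝ≥0∞} (hf : ∫⁻ x, f x ^ P x ≤ K) : ∫⁻ x, (K⁻¹ * f x) ^ P x ≤ 1 := by
  refine (h.lintegral_inv_mul_rpow_le hK f).trans ((mul_le_mul_right hf _).trans ?_)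
  rw [ENNReal.inv_mul_cancel (one_pos.trans_le hK).ne' hKt]

lemma modular_le_of_inv_mul (h : LocExp P a b c) {K : ℝ≥0∞} (hK : 1 ≤ K) (hKt : K ≠ ∞)
    {f : Rn n → ℝ≥0∞} (hf : ∫⁻ x, (K⁻¹ * f x) ^ P x ≤ 1) : ∫⁻ x, f x ^ P x ≤ K ^ b := by
  have hK0 : K ≠ 0 := (one_pos.trans_le hK).ne'
  calc ∫⁻ x, f x ^ P x = ∫⁻ x, (K * (K⁻¹ * f x)) ^ P x := by
        simp_rw [← mul_assoc, ENNReal.mul_inv_cancel hK0 hKt, one_mul]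
    _ ≤ K ^ b * ∫⁻ x, (K⁻¹ * f x) ^ P x := h.lintegral_const_mul_rpow_le hK hKt _
    _ ≤ K ^ b * 1 := by gcongr
    _ = K ^ b := mul_one _

lemma modular_le_one_of_dual_of_ne_top (h : LocExp P a b c) {D : Rn n → ℝ≥0∞} (hD : Measurable D)
    (hDf : ∀ x, D x ≠ ∞) (hN : ∫⁻ x, D x ^ P x ≠ ∞)
    (hdual : ∀ w : Rn n → ℝ≥0∞, Measurable w →
      ∫⁻ x, w x ^ Real.conjExponent (P x) ≤ 1 → ∫⁻ x, D x * w x ≤ 1) :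
    ∫⁻ x, D x ^ P x ≤ 1 := by
  by_contra! hN1
  set N := ∫⁻ x, D x ^ P x with hNdef
  have hN0 : N ≠ 0 := (one_pos.trans hN1).ne'
  set w : Rn n → ℝ≥0∞ := fun x => D x ^ (P x - 1) * N ^ (-(1 - (P x)⁻¹)) with hw
  have hPm := h.meas
  have hwm : Measurable w :=
    (hD.pow (hPm.sub_const 1)).mul (measurable_const.pow (hPm.inv.const_sub 1).neg)
  have hNi : N⁻¹ ≠ ∞ := ENNReal.inv_ne_top.2 hN0
  have hwmod : ∫⁻ x, w x ^ Real.conjExponent (P x) ≤ 1 := by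
    have : ∀ x, w x ^ Real.conjExponent (P x) = D x ^ P x * N⁻¹ := by
      intro x
      have h1 : P x - 1 ≠ 0 := by linarith [h.one_lt' x]
      have h2 : P x ≠ 0 := (h.pos x).ne'
      rw [hw]
      dsimp only
      rw [ENNReal.mul_rpow_of_nonneg _ _ (one_pos.trans (one_lt_conj (h.one_lt' x))).le,
        ← ENNReal.rpow_mul, ← ENNReal.rpow_mul, ← ENNReal.rpow_neg_one]
      unfold Real.conjExponent
      congr 2 <;> field_simp
    simp_rw [this]
    rw [lintegral_mul_const _ (hD.pow hPm), ENNReal.mul_inv_cancel hN0 hN]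
  have hle := hdual w hwm hwmod
  have hlow : N ^ b⁻¹ ≤ ∫⁻ x, D x * w x := by
    have hpt : ∀ x, D x ^ P x * (N⁻¹ * N ^ b⁻¹) ≤ D x * w x := by
      intro x
      have h1 : 0 < P x - 1 := by linarith [h.one_lt' x]
      have h2 : D x * D x ^ (P x - 1) = D x ^ P x := by
        rcases eq_or_ne (D x) 0 with h0 | h0
        · rw [h0, zero_mul, ENNReal.zero_rpow_of_pos (h.pos x)]
        · nth_rewrite 1 [← ENNReal.rpow_one (D x)]
          rw [← ENNReal.rpow_add _ _ h0 (hDf x)]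
          congr 1; ring
      rw [hw]
      dsimp only
      rw [← mul_assoc (D x), h2]
      gcongr
      rw [← ENNReal.rpow_neg_one, ← ENNReal.rpow_add _ _ hN0 hN]
      refine ENNReal.rpow_le_rpow_of_exponent_le hN1.le ?_
      have : b⁻¹ ≤ (P x)⁻¹ := inv_anti₀ (h.pos x) (h.upper x)
      linarith
    calc N ^ b⁻¹ = ∫⁻ x, D x ^ P x * (N⁻¹ * N ^ b⁻¹) := by
          rw [lintegral_mul_const _ (hD.pow hPm), ← hNdef, ← mul_assoc,
            ENNReal.mul_inv_cancel hN0 hN, one_mul]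
      _ ≤ _ := lintegral_mono hpt
  have := ENNReal.one_lt_rpow hN1 (inv_pos.2 h.b_pos)
  exact absurd (this.trans_le (hlow.trans hle)) (lt_irrefl _)

/-- The modular is controlled by duality against the conjugate exponent. -/
lemma modular_le_one_of_dual (h : LocExp P a b c) {D : Rn n → ℝ≥0∞} (hD : Measurable D)
    (hdual : ∀ w : Rn n → ℝ≥0∞, Measurable w →
      ∫⁻ x, w x ^ Real.conjExponent (P x) ≤ 1 → ∫⁻ x, D x * w x ≤ 1) :
    ∫⁻ x, D x ^ P x ≤ 1 := by
  set B : ℕ → Rn n → ℝ≥0∞ := fun k =>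
    (Metric.ball (0 : Rn n) k).indicator fun x => min (D x) k with hB
  have hBm : ∀ k, Measurable (B k) := fun k =>
    (hD.min measurable_const).indicator measurableSet_ball
  have hBD : ∀ k x, B k x ≤ D x := fun k x =>
    (Set.indicator_le_self _ _ x).trans (min_le_left _ _)
  have hBk : ∀ k x, B k x ≤ k := fun k x =>
    (Set.indicator_le_self _ _ x).trans (min_le_right _ _)
  have hBf : ∀ k x, B k x ≠ ∞ := fun k x =>
    ne_top_of_le_ne_top (ENNReal.natCast_ne_top k) (hBk k x)
  have hBi : ∀ k : ℕ, ∫⁻ x, B k x ^ P x ≠ ∞ := by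
    intro k
    have hle : ∀ x, B k x ^ P x ≤
        (Metric.ball (0 : Rn n) k).indicator (fun _ => (1 + (k : ℝ≥0∞)) ^ b) x := by
      intro x
      by_cases hx : x ∈ Metric.ball (0 : Rn n) k
      · rw [Set.indicator_of_mem hx]
        calc B k x ^ P x ≤ (1 + (k : ℝ≥0∞)) ^ P x :=
              ENNReal.rpow_le_rpow ((hBk k x).trans le_add_self) (h.pos x).le
          _ ≤ _ := ENNReal.rpow_le_rpow_of_exponent_le le_self_add (h.upper x)
      · rw [Set.indicator_of_notMem hx, hB]
        dsimp only
        rw [Set.indicator_of_notMem hx, ENNReal.zero_rpow_of_pos (h.pos x)]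
    refine ne_top_of_le_ne_top ?_ (lintegral_mono hle)
    rw [lintegral_indicator measurableSet_ball, setLIntegral_const]
    have := h.b_pos
    have := (measure_ball_lt_top (μ := (volume : Measure (Rn n))) (x := 0) (r := k)).ne
    finiteness
  have hB1 : ∀ k, ∫⁻ x, B k x ^ P x ≤ 1 := fun k =>
    h.modular_le_one_of_dual_of_ne_top (hBm k) (hBf k) (hBi k) fun w hw hw1 =>
      (lintegral_mono fun x => mul_le_mul_left (hBD k x) _).trans (hdual w hw hw1)
  refine le_of_tendsto' (lintegral_tendsto_of_tendsto_of_monotone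
    (fun k => ((hBm k).pow h.meas).aemeasurable) (Filter.Eventually.of_forall fun x => ?_)
    (Filter.Eventually.of_forall fun x => ?_)) hB1
  · intro k l hkl
    refine ENNReal.rpow_le_rpow ?_ (h.pos x).le
    have hkl' : (k : ℝ) ≤ l := by exact_mod_cast hkl
    refine (Set.indicator_le_indicator_of_subset (Metric.ball_subset_ball hkl')
      (fun _ => zero_le) x).trans (Set.indicator_le_indicator ?_)
    exact min_le_min_left _ (by exact_mod_cast hkl)
  · have h1 : Filter.Tendsto (fun k => B k x) Filter.atTop (nhds (D x)) := by
      have h2 : Filter.Tendsto (fun k : ℕ => min (D x) (k : ℝ≥0∞)) Filter.atTop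
          (nhds (min (D x) ∞)) := tendsto_const_nhds.min ENNReal.tendsto_nat_nhds_top
      rw [min_eq_left le_top] at h2
      refine h2.congr' ?_
      obtain ⟨K, hK⟩ := exists_nat_gt ‖x‖
      filter_upwards [Filter.eventually_ge_atTop K] with k hk
      have hx : x ∈ Metric.ball (0 : Rn n) k := by
        rw [mem_ball_zero_iff]
        exact hK.trans_le (by exact_mod_cast hk)
      rw [hB]
      dsimp only
      rw [Set.indicator_of_mem hx]
    exact (ENNReal.continuous_rpow_const.tendsto (D x)).comp h1

end LocExp

namespace DecExp

variable {P : Rn n → ℝ} {Pi a b c : ℝ}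

/-- The Rubio de Francia majorant: every function in the unit ball is dominated by one on which
the maximal function acts as multiplication by a bounded factor. -/
lemma exists_majorant (h : DecExp P Pi a b c) : ∃ C A : ℝ≥0∞, C ≠ ∞ ∧ A ≠ ∞ ∧
    ∀ G : Rn n → ℝ≥0∞, Measurable G → ∫⁻ x, G x ^ P x ≤ 1 →
      ∃ G' : Rn n → ℝ≥0∞, Measurable G' ∧ (∀ x, G x ≤ G' x) ∧
        (∀ x, dyMax G' x ≤ A * G' x) ∧ ∫⁻ x, G' x ^ P x ≤ C := by
  obtain ⟨C, hC, hM⟩ := h.dyMax_modular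
  set A : ℝ≥0∞ := 1 + C with hA
  have hA1 : 1 ≤ A := le_self_add
  have hAt : A ≠ ∞ := by finiteness
  have hA0 : A ≠ 0 := (one_pos.trans_le hA1).ne'
  have hb := h.b_pos
  refine ⟨2 ^ b * 2, 4 * A, by have := two_rpow_ne_top b; finiteness, by finiteness,
    fun G hG hG1 => ?_⟩
  set F : ℕ → Rn n → ℝ≥0∞ := fun k =>
    (fun f : Rn n → ℝ≥0∞ => fun x => A⁻¹ * dyMax f x)^[k] G with hF
  have hFs : ∀ k, F (k + 1) = fun x => A⁻¹ * dyMax (F k) x := fun k =>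
    Function.iterate_succ_apply' _ _ _
  have hFm : ∀ k, Measurable (F k) := by
    intro k
    induction k with
    | zero => exact hG
    | succ k ih =>
      rw [hFs]
      exact (measurable_dyMax ih).const_mul _
  have hFmod : ∀ k, ∫⁻ x, F k x ^ P x ≤ 1 := by
    intro k
    induction k with
    | zero => exact hG1
    | succ k ih =>
      rw [hFs]
      exact h.modular_inv_mul_le_one hA1 hAt ((hM _ (hFm k) ih).trans le_add_self)
  have hMF : ∀ k x, dyMax (F k) x = A * F (k + 1) x := by
    intro k x
    rw [hFs, ← mul_assoc, ENNReal.mul_inv_cancel hA0 hAt, one_mul]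
  have h4 : (4 : ℝ≥0∞)⁻¹ = 2⁻¹ * 2⁻¹ := by
    rw [← ENNReal.mul_inv (by simp) (by simp)]; norm_num
  refine ⟨fun x => ∑' k, 4⁻¹ ^ k * F k x, Measurable.tsum fun k => (hFm k).const_mul _,
    fun x => ?_, fun x => ?_, ?_⟩
  · refine le_trans ?_ (ENNReal.le_tsum 0)
    simp [hF]
  · calc dyMax (fun x => ∑' k, 4⁻¹ ^ k * F k x) x
        ≤ ∑' k, dyMax (fun x => 4⁻¹ ^ k * F k x) x :=
          dyMax_tsum_le (fun k => (hFm k).const_mul _) x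
      _ = ∑' k, 4 * A * (4⁻¹ ^ (k + 1) * F (k + 1) x) := by
          congr 1
          funext k
          rw [dyMax_const_mul (hFm k), hMF, pow_succ]
          have : (4 : ℝ≥0∞) * 4⁻¹ = 1 := ENNReal.mul_inv_cancel (by simp) (by simp)
          calc (4⁻¹ : ℝ≥0∞) ^ k * (A * F (k + 1) x)
              = (4 * 4⁻¹) * (4⁻¹ ^ k * (A * F (k + 1) x)) := by rw [this, one_mul]
            _ = _ := by ring
      _ = 4 * A * ∑' k, 4⁻¹ ^ (k + 1) * F (k + 1) x := ENNReal.tsum_mul_left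
      _ ≤ 4 * A * ∑' k, 4⁻¹ ^ k * F k x := by
          exact mul_le_mul_right (ENNReal.tsum_comp_le_tsum_of_injective
            (add_left_injective 1) fun k => 4⁻¹ ^ k * F k x) _
  · have hpt : ∀ x, (∑' k, 4⁻¹ ^ k * F k x) ^ P x ≤ 2 ^ b * ∑' k, 2⁻¹ ^ k * F k x ^ P x := by
      intro x
      set S := ⨆ k, (2⁻¹ : ℝ≥0∞) ^ k * F k x with hS
      have h1 : ∑' k, 4⁻¹ ^ k * F k x ≤ 2 * S := by
        calc ∑' k, 4⁻¹ ^ k * F k x = ∑' k, (2⁻¹ : ℝ≥0∞) ^ k * (2⁻¹ ^ k * F k x) := by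
              congr 1
              funext k
              rw [h4, mul_pow, mul_assoc]
          _ ≤ ∑' k, (2⁻¹ : ℝ≥0∞) ^ k * S := ENNReal.tsum_le_tsum fun k =>
              mul_le_mul_right (le_iSup (fun k => (2⁻¹ : ℝ≥0∞) ^ k * F k x) k) _
          _ = 2 * S := by rw [ENNReal.tsum_mul_right, ENNReal.tsum_inv_two_pow]
      calc (∑' k, 4⁻¹ ^ k * F k x) ^ P x ≤ (2 * S) ^ P x :=
            ENNReal.rpow_le_rpow h1 (h.pos x).le
        _ = 2 ^ P x * S ^ P x := ENNReal.mul_rpow_of_nonneg _ _ (h.pos x).le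
        _ ≤ _ := by
            refine mul_le_mul' (ENNReal.rpow_le_rpow_of_exponent_le one_le_two (h.upper x)) ?_
            refine iSup_rpow_le (h.pos x) fun k => ?_
            rw [ENNReal.mul_rpow_of_nonneg _ _ (h.pos x).le]
            refine le_trans (mul_le_mul_left ?_ _)
              (ENNReal.le_tsum (f := fun k => 2⁻¹ ^ k * F k x ^ P x) k)
            exact ENNReal.rpow_le_self_of_le_one
              (pow_le_one₀ zero_le (ENNReal.inv_le_one.2 one_le_two)) (h.one_lt' x).le
    calc ∫⁻ x, (∑' k, 4⁻¹ ^ k * F k x) ^ P x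
        ≤ ∫⁻ x, 2 ^ b * ∑' k, 2⁻¹ ^ k * F k x ^ P x := lintegral_mono hpt
      _ = 2 ^ b * ∑' k, 2⁻¹ ^ k * ∫⁻ x, F k x ^ P x := by
          rw [lintegral_const_mul' _ _ (two_rpow_ne_top b), lintegral_tsum fun k =>
            (((hFm k).pow h.meas).const_mul _).aemeasurable]
          congr 2
          funext k
          exact lintegral_const_mul _ ((hFm k).pow h.meas)
      _ ≤ 2 ^ b * ∑' k : ℕ, 2⁻¹ ^ k * 1 := by
          refine mul_le_mul_right (ENNReal.tsum_le_tsum fun k => ?_) _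
          exact mul_le_mul_right (hFmod k) _
      _ = _ := by simp_rw [mul_one]; rw [ENNReal.tsum_inv_two_pow]

/-- Sums of convolutions are bounded when the sum of the functions is. -/
lemma modular_tsum_lconv_le (h : DecExp P Pi a b c) {m : ℝ} (hm : n < m) :
    ∃ C : ℝ≥0∞, C ≠ ∞ ∧ ∀ (f : ℕ → Rn n → ℝ≥0∞) (G : Rn n → ℝ≥0∞), (∀ ν, Measurable (f ν)) →
      Measurable G → (∀ x, ∑' ν, f ν x ≤ G x) → ∫⁻ x, G x ^ P x ≤ 1 →
        ∫⁻ x, (∑' ν, lconv (etaK ν m) (f ν) x) ^ P x ≤ C := by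
  obtain ⟨C₁, hC₁, hk⟩ := lconv_etaK_le_dyMax n hm
  obtain ⟨C₂, hC₂, hM⟩ := h.conj.dyMax_modular
  set K : ℝ≥0∞ := 1 + C₁ * (1 + C₂) with hK
  have hK1 : 1 ≤ K := le_self_add
  have hKt : K ≠ ∞ := by finiteness
  have hK0 : K ≠ 0 := (one_pos.trans_le hK1).ne'
  have hb := h.b_pos
  refine ⟨K ^ b, by finiteness, fun f G hf hG hfG hG1 => ?_⟩
  have hTm : ∀ ν, Measurable (lconv (etaK ν m) (f ν)) := fun ν =>
    measurable_lconv (measurable_etaK ν m) (hf ν)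
  have hBm : Measurable fun x => ∑' ν, lconv (etaK ν m) (f ν) x := Measurable.tsum hTm
  refine h.modular_le_of_inv_mul hK1 hKt (h.modular_le_one_of_dual (hBm.const_mul _) ?_)
  intro w hw hw1
  have hMm := measurable_dyMax hw
  have key : ∫⁻ x, (∑' ν, lconv (etaK ν m) (f ν) x) * w x ≤ K := by
    calc ∫⁻ x, (∑' ν, lconv (etaK ν m) (f ν) x) * w x
        = ∑' ν, ∫⁻ x, lconv (etaK ν m) (f ν) x * w x := by
          simp_rw [← ENNReal.tsum_mul_right]
          exact lintegral_tsum fun ν => ((hTm ν).mul hw).aemeasurable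
      _ = ∑' ν, ∫⁻ x, f ν x * lconv (etaK ν m) w x := by
          congr 1
          funext ν
          exact lintegral_lconv_etaK_mul ν m (hf ν) hw
      _ ≤ ∑' ν, ∫⁻ x, f ν x * (C₁ * dyMax w x) :=
          ENNReal.tsum_le_tsum fun ν => lintegral_mono fun x => mul_le_mul_right (hk ν w hw x) _
      _ = ∫⁻ x, (∑' ν, f ν x) * (C₁ * dyMax w x) := by
          simp_rw [← ENNReal.tsum_mul_right]
          exact (lintegral_tsum fun ν => ((hf ν).mul (hMm.const_mul _)).aemeasurable).symm
      _ ≤ ∫⁻ x, C₁ * (G x ^ P x + dyMax w x ^ Real.conjExponent (P x)) := by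
          refine lintegral_mono fun x => ?_
          rw [mul_left_comm]
          exact mul_le_mul_right ((mul_le_mul_left (hfG x) _).trans
            (ENNReal.mul_le_rpow_add_rpow_conj _ _ (h.one_lt' x))) _
      _ = C₁ * ((∫⁻ x, G x ^ P x) + ∫⁻ x, dyMax w x ^ Real.conjExponent (P x)) := by
          rw [lintegral_const_mul' _ _ hC₁, lintegral_add_left (hG.pow h.meas)]
      _ ≤ C₁ * (1 + C₂) := by
          gcongr
          exact hM w hw hw1
      _ ≤ K := le_add_self
  calc ∫⁻ x, K⁻¹ * (∑' ν, lconv (etaK ν m) (f ν) x) * w x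
      = K⁻¹ * ∫⁻ x, (∑' ν, lconv (etaK ν m) (f ν) x) * w x := by
        simp_rw [mul_assoc]
        exact lintegral_const_mul _ (hBm.mul hw)
    _ ≤ K⁻¹ * K := by gcongr
    _ = 1 := ENNReal.inv_mul_cancel hK0 hKt

end DecExp

/-- The `ℓ^s` norm of a sequence in `[0, ∞]` for a real exponent `s`. -/
def lqR (s : ℝ) (a : ℕ → ℝ≥0∞) : ℝ≥0∞ := (∑' ν, a ν ^ s) ^ (1 / s)

lemma le_lqR {s : ℝ} (hs : 0 < s) (a : ℕ → ℝ≥0∞) (ν : ℕ) : a ν ≤ lqR s a := by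
  unfold lqR
  rw [one_div, ENNReal.le_rpow_inv_iff hs]
  exact ENNReal.le_tsum ν

lemma lqR_rpow {s : ℝ} (hs : 0 < s) (a : ℕ → ℝ≥0∞) : lqR s a ^ s = ∑' ν, a ν ^ s := by
  unfold lqR
  rw [one_div, ENNReal.rpow_inv_rpow hs.ne']

lemma measurable_lqR {Q : Rn n → ℝ} (hQ : Measurable Q) {f : ℕ → Rn n → ℝ≥0∞}
    (hf : ∀ ν, Measurable (f ν)) : Measurable fun x => lqR (Q x) fun ν => f ν x := by
  unfold lqR
  exact (Measurable.tsum fun ν => (hf ν).pow hQ).pow (hQ.const_div 1)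

lemma etaK_mul_ofReal_rpow (ν : ℕ) (m δ : ℝ) (z : Rn n) :
    etaK ν m z * ENNReal.ofReal ((1 + 2 ^ ν * ‖z‖) ^ δ) = etaK ν (m - δ) z := by
  unfold etaK
  rw [← ENNReal.ofReal_mul (by positivity), mul_assoc, ← Real.rpow_add (by positivity)]
  congr 4
  ring

lemma etaK_anti (ν : ℕ) {m m' : ℝ} (h : m' ≤ m) (z : Rn n) : etaK ν m z ≤ etaK ν m' z := by
  unfold etaK
  refine ENNReal.ofReal_le_ofReal ?_
  have : 1 ≤ 1 + 2 ^ ν * ‖z‖ := by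
    have : 0 ≤ 2 ^ ν * ‖z‖ := by positivity
    linarith
  gcongr

namespace LocExp

variable {Q : Rn n → ℝ} {a b c : ℝ}

/-- Powers with exponents `Q x` and `Q y` of a number that is not too small at scale `2^{-ν}`
agree up to a small power of `1 + 2^ν |x - y|`. -/
lemma rpow_sub_le_of_scale (h : LocExp Q a b c) {δ : ℝ} (hδ : 0 < δ) :
    ∃ C : ℝ≥0∞, C ≠ ∞ ∧ ∀ (ν : ℕ) (x y : Rn n) (t : ℝ≥0∞),
      2 ^ (-(δ / (2 * b) * ν)) ≤ t → t ≤ 1 →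
        t ^ (Q x - Q y) ≤ C * ENNReal.ofReal ((1 + 2 ^ ν * ‖x - y‖) ^ δ) := by
  have hb := h.b_pos
  set K : ℝ := δ / (2 * b) with hK
  have hK0 : 0 < K := by positivity
  refine ⟨1 + ENNReal.ofReal (Real.exp (2 * K * c)), by finiteness, fun ν x y t ht ht1 => ?_⟩
  have htinv : t⁻¹ ≤ 2 ^ (K * ν) := by
    rw [ENNReal.inv_le_iff_inv_le, ← ENNReal.rpow_neg]
    exact ht
  have hge : ∀ e : ℝ, 0 ≤ e → (1 : ℝ≥0∞) ≤ 2 ^ e := fun e he => by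
    have := ENNReal.rpow_le_rpow_of_exponent_le (x := 2) one_le_two he
    rwa [ENNReal.rpow_zero] at this
  rcases le_or_gt ‖x - y‖ (2 ^ (-(ν / 2 : ℝ))) with hxy | hxy
  · have hR : (0 : ℝ) < 2 ^ (-(ν / 2 : ℝ)) := by positivity
    have hRK : (2 : ℝ≥0∞) ^ (K * ν) ≤
        1 * ENNReal.ofReal (Real.exp 1 + (2 ^ (-(ν / 2 : ℝ)))⁻¹) ^ (2 * K) := by
      rw [one_mul]
      calc (2 : ℝ≥0∞) ^ (K * ν) = ENNReal.ofReal ((2 ^ (-(ν / 2 : ℝ)))⁻¹) ^ (2 * K) := by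
            rw [← Real.rpow_neg zero_le_two, neg_neg,
              ← ENNReal.ofReal_rpow_of_pos two_pos, ← ENNReal.rpow_mul]
            congr 1
            · simp
            · ring
        _ ≤ _ := by
            gcongr
            linarith [Real.exp_pos 1]
    have h1 := h.rpow_comparison (t := t) le_rfl (by positivity) hR
      ((dist_eq_norm x y).trans_le hxy)
      (ht1.trans ((hge _ (by positivity)).trans hRK)) (htinv.trans hRK)
    rw [ENNReal.one_rpow, one_mul] at h1
    refine (h1.trans le_add_self).trans (le_mul_of_one_le_right zero_le ?_)
    refine ENNReal.one_le_ofReal.2 (Real.one_le_rpow ?_ hδ.le)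
    have : 0 ≤ 2 ^ ν * ‖x - y‖ := by positivity
    linarith
  · have h1 : t ^ (Q x - Q y) ≤ (2 ^ (K * ν)) ^ |Q x - Q y| :=
      rpow_le_rpow_abs (ht1.trans (hge _ (by positivity))) htinv _
    have h2 : ((2 : ℝ≥0∞) ^ (K * ν)) ^ |Q x - Q y| ≤ (2 ^ (K * ν)) ^ b :=
      ENNReal.rpow_le_rpow_of_exponent_le (hge _ (by positivity)) (h.abs_sub_le x y)
    have h3 : ((2 : ℝ≥0∞) ^ (K * ν)) ^ b = ENNReal.ofReal (2 ^ (δ / 2 * ν)) := by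
      rw [← ENNReal.ofReal_rpow_of_pos two_pos, ← ENNReal.rpow_mul]
      congr 1
      · simp
      · rw [hK]; field_simp
    have h4 : (2 : ℝ) ^ (δ / 2 * ν) ≤ (1 + 2 ^ ν * ‖x - y‖) ^ δ := by
      have h5 : (2 : ℝ) ^ (ν / 2 : ℝ) ≤ 1 + 2 ^ ν * ‖x - y‖ := by
        have : (2 : ℝ) ^ (ν / 2 : ℝ) = 2 ^ ν * 2 ^ (-(ν / 2 : ℝ)) := by
          rw [← Real.rpow_natCast, ← Real.rpow_add two_pos]
          congr 1; ring
        rw [this]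
        have : (2 : ℝ) ^ ν * 2 ^ (-(ν / 2 : ℝ)) ≤ 2 ^ ν * ‖x - y‖ := by gcongr
        linarith
      calc (2 : ℝ) ^ (δ / 2 * ν) = (2 ^ (ν / 2 : ℝ)) ^ δ := by
            rw [← Real.rpow_mul zero_le_two]; congr 1; ring
        _ ≤ _ := by gcongr
    refine ((h1.trans h2).trans_eq h3).trans ((ENNReal.ofReal_le_ofReal h4).trans ?_)
    exact le_mul_of_one_le_left zero_le le_self_add

/-- A pointwise bound of the `ℓ^{q(·)}` norm of convolutions by a scalar quantity. -/
lemma lqR_lconv_le (h : LocExp Q a b c) {m' m : ℝ} (hm : m' < m) :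
    ∃ C : ℝ≥0∞, C ≠ ∞ ∧ ∀ (A : ℝ≥0∞) (f : ℕ → Rn n → ℝ≥0∞) (G G' : Rn n → ℝ≥0∞),
      (∀ ν, Measurable (f ν)) → Measurable G → (∀ ν x, f ν x ≤ 1) →
      (∀ ν x, lconv (etaK ν m') G x ≤ A * G' x) → ∀ x,
        lqR (Q x) (fun ν => lconv (etaK ν m) (fun y => f ν y * G y) x) ≤
          C * (1 + A) * (G' x + ∑' ν, lconv (etaK ν m') (fun y => f ν y ^ Q y * G y) x) := by
  have hb := h.b_pos
  obtain ⟨C, hC, hcomp⟩ := h.rpow_sub_le_of_scale (sub_pos.2 hm)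
  set K : ℝ := (m - m') / (2 * b) with hK
  have hK0 : 0 < K := div_pos (sub_pos.2 hm) (by positivity)
  set θ : ℝ≥0∞ := 2 ^ (-K) with hθ
  have hθ1 : θ < 1 := two_rpow_neg_lt_one hK0
  set Z := ∑' ν : ℕ, θ ^ ν with hZ
  have hZt : Z ≠ ∞ := by
    rw [hZ, ENNReal.tsum_geometric]
    simpa [tsub_eq_zero_iff_le] using hθ1
  refine ⟨(1 + C) * (Z + 1), by finiteness, fun A f G G' hf hG hf1 hA x => ?_⟩
  set S : ℕ → ℝ≥0∞ := fun ν => lconv (etaK ν m') (fun y => f ν y ^ Q y * G y) x with hS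
  set H := G' x + ∑' ν, S ν with hH
  have hQ := h.pos x
  have hQ1 := h.one_lt' x
  have hSH : ∀ ν, S ν ≤ H := fun ν => (ENNReal.le_tsum ν).trans le_add_self
  rcases eq_or_ne H ∞ with hHt | hHt
  · rw [hHt, ENNReal.mul_top]
    · exact le_top
    · exact mul_ne_zero (mul_ne_zero (by simp) (by simp)) (by simp)
  set t : ℕ → ℝ≥0∞ := fun ν => max (θ ^ ν) ((S ν / H) ^ (Q x)⁻¹) with ht
  have hθν : ∀ ν : ℕ, θ ^ ν = 2 ^ (-(K * ν)) := fun ν => by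
    rw [hθ, ← ENNReal.rpow_natCast, ← ENNReal.rpow_mul]
    congr 1; ring
  have ht0 : ∀ ν, t ν ≠ 0 := fun ν =>
    (lt_max_of_lt_left (pos_iff_ne_zero.2 (pow_ne_zero _ (two_rpow_ne_zero _)))).ne'
  have hSH1 : ∀ ν, S ν / H ≤ 1 := fun ν => ENNReal.div_le_of_le_mul (by rw [one_mul]; exact hSH ν)
  have ht1 : ∀ ν, t ν ≤ 1 := fun ν => max_le (pow_le_one₀ zero_le hθ1.le)
    (ENNReal.rpow_le_one (hSH1 ν) (inv_nonneg.2 hQ.le))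
  have htt : ∀ ν, t ν ≠ ∞ := fun ν => ne_top_of_le_ne_top one_ne_top (ht1 ν)
  have hSt : ∀ ν, S ν ≤ t ν ^ Q x * H := by
    intro ν
    have h1 : S ν / H ≤ t ν ^ Q x := by
      have := ENNReal.rpow_le_rpow (le_max_right (θ ^ ν) ((S ν / H) ^ (Q x)⁻¹)) hQ.le
      rwa [ENNReal.rpow_inv_rpow hQ.ne'] at this
    calc S ν = S ν / H * H := by
          rcases eq_or_ne H 0 with h0 | h0
          · have : S ν = 0 := le_zero_iff.1 (h0 ▸ hSH ν)
            rw [this, h0]; simp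
          · exact (ENNReal.div_mul_cancel h0 hHt).symm
      _ ≤ _ := by gcongr
  have hT : ∀ ν, lconv (etaK ν m) (fun y => f ν y * G y) x ≤ (1 + C) * (1 + A) * H * t ν := by
    intro ν
    have hkm : Measurable (etaK ν m' : Rn n → ℝ≥0∞) := measurable_etaK ν m'
    have hfQ : Measurable fun y => f ν y ^ Q y := (hf ν).pow h.meas
    have hpt : ∀ y, etaK ν m (x - y) * (f ν y * G y) ≤
        t ν * (etaK ν m' (x - y) * G y) +
          C * t ν ^ (1 - Q x) * (etaK ν m' (x - y) * (f ν y ^ Q y * G y)) := by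
      intro y
      have h1 := le_add_rpow_mul_rpow (f := f ν y) (h.one_lt' y).le (ht0 ν) (htt ν)
      have h2 : t ν ^ (1 - Q y) ≤
          C * ENNReal.ofReal ((1 + 2 ^ ν * ‖x - y‖) ^ (m - m')) * t ν ^ (1 - Q x) := by
        refine rpow_le_mul_rpow_of_sub (ht0 ν) (htt ν) ?_
        have := hcomp ν x y (t ν) ((hθν ν).symm.le.trans (le_max_left _ _)) (ht1 ν)
        rwa [show 1 - Q y - (1 - Q x) = Q x - Q y by ring]
      calc etaK ν m (x - y) * (f ν y * G y)
          ≤ etaK ν m (x - y) * ((t ν + f ν y ^ Q y *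
              (C * ENNReal.ofReal ((1 + 2 ^ ν * ‖x - y‖) ^ (m - m')) * t ν ^ (1 - Q x))) * G y) := by
            gcongr
            exact h1.trans (by gcongr)
        _ = t ν * (etaK ν m (x - y) * G y) + C * t ν ^ (1 - Q x) *
              ((etaK ν m (x - y) * ENNReal.ofReal ((1 + 2 ^ ν * ‖x - y‖) ^ (m - m'))) *
                (f ν y ^ Q y * G y)) := by ring
        _ ≤ _ := by
            rw [etaK_mul_ofReal_rpow, _root_.sub_sub_cancel]
            gcongr
            exact etaK_anti ν hm.le _
    calc lconv (etaK ν m) (fun y => f ν y * G y) x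
        ≤ ∫⁻ y, (t ν * (etaK ν m' (x - y) * G y) +
          C * t ν ^ (1 - Q x) * (etaK ν m' (x - y) * (f ν y ^ Q y * G y))) := lintegral_mono hpt
      _ = t ν * lconv (etaK ν m') G x + C * t ν ^ (1 - Q x) * S ν := by
          rw [lintegral_add_left (by fun_prop), lintegral_const_mul _ (by fun_prop),
            lintegral_const_mul _ (by fun_prop)]
          rfl
      _ ≤ t ν * (A * G' x) + C * t ν ^ (1 - Q x) * (t ν ^ Q x * H) := by
          gcongr
          · exact hA ν x
          · exact hSt ν
      _ = t ν * (A * G' x) + C * (t ν ^ (1 - Q x) * t ν ^ Q x) * H := by ring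
      _ = t ν * (A * G' x) + C * t ν * H := by
          rw [← ENNReal.rpow_add _ _ (ht0 ν) (htt ν), sub_add_cancel, ENNReal.rpow_one]
      _ ≤ t ν * ((1 + A) * H) + C * t ν * ((1 + A) * H) := by
          gcongr
          · exact le_add_self
          · exact le_self_add
          · exact le_mul_of_one_le_left zero_le le_self_add
      _ = _ := by ring
  have htsum : ∑' ν, t ν ^ Q x ≤ Z + 1 := by
    have h1 : ∀ ν, t ν ^ Q x ≤ θ ^ ν + S ν / H := by
      intro ν
      rcases max_choice (θ ^ ν) ((S ν / H) ^ (Q x)⁻¹) with h2 | h2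
      · refine le_trans ?_ le_self_add
        rw [ht]
        dsimp only
        rw [h2]
        exact ENNReal.rpow_le_self_of_le_one (pow_le_one₀ zero_le hθ1.le) hQ1.le
      · refine le_trans ?_ le_add_self
        rw [ht]
        dsimp only
        rw [h2, ENNReal.rpow_inv_rpow hQ.ne']
    refine (ENNReal.tsum_le_tsum h1).trans ?_
    rw [ENNReal.tsum_add]
    simp_rw [div_eq_mul_inv]
    rw [ENNReal.tsum_mul_right, ← div_eq_mul_inv]
    gcongr
    exact ENNReal.div_le_of_le_mul (by rw [one_mul]; exact le_add_self)
  unfold lqR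
  rw [one_div, ENNReal.rpow_inv_le_iff hQ]
  calc ∑' ν, lconv (etaK ν m) (fun y => f ν y * G y) x ^ Q x
      ≤ ∑' ν, ((1 + C) * (1 + A) * H) ^ Q x * t ν ^ Q x :=
        ENNReal.tsum_le_tsum fun ν => by
          rw [← ENNReal.mul_rpow_of_nonneg _ _ hQ.le]
          exact ENNReal.rpow_le_rpow (hT ν) hQ.le
    _ ≤ ((1 + C) * (1 + A) * H) ^ Q x * (Z + 1) ^ Q x := by
        rw [ENNReal.tsum_mul_left]
        gcongr
        exact htsum.trans (ENNReal.le_rpow_self_of_one_le le_add_self hQ1.le)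
    _ = _ := by
        rw [← ENNReal.mul_rpow_of_nonneg _ _ hQ.le]
        congr 1
        ring

end LocExp

/-- The convolution inequality in `L^{p(·)}(ℓ^{q(·)})`. -/
lemma DecExp.modular_lqR_lconv_le {P Q : Rn n → ℝ} {Pi a b c a' b' c' : ℝ}
    (h : DecExp P Pi a b c) (hQ : LocExp Q a' b' c') {m : ℝ} (hm : n < m) :
    ∃ C : ℝ≥0∞, C ≠ ∞ ∧ ∀ f : ℕ → Rn n → ℝ≥0∞, (∀ ν, Measurable (f ν)) →
      ∫⁻ x, (lqR (Q x) fun ν => f ν x) ^ P x ≤ 1 →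
        ∫⁻ x, (lqR (Q x) fun ν => lconv (etaK ν m) (f ν) x) ^ P x ≤ C := by
  have hb := h.b_pos
  have hm1 : n < (n + m) / 2 := by linarith
  have hm2 : (n + m) / 2 < m := by linarith
  set m' := (n + m) / 2 with hm'
  obtain ⟨C₁, A, hC₁, hA, hmaj⟩ := h.exists_majorant
  obtain ⟨C₂, hC₂, hk⟩ := lconv_etaK_le_dyMax n hm1
  obtain ⟨C₃, hC₃, hsum⟩ := h.modular_tsum_lconv_le hm1
  obtain ⟨C₄, hC₄, hpt⟩ := hQ.lqR_lconv_le hm2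
  set K : ℝ≥0∞ := 1 + C₄ * (1 + C₂ * A) with hK
  have hKt : K ≠ ∞ := by finiteness
  refine ⟨K ^ b * (2 ^ b * (C₁ + C₃)), by have := two_rpow_ne_top b; finiteness,
    fun f hf hmod => ?_⟩
  set G : Rn n → ℝ≥0∞ := fun x => lqR (Q x) fun ν => f ν x with hG
  have hGm : Measurable G := measurable_lqR hQ.meas hf
  obtain ⟨G', hG'm, hGG', hMG', hG'mod⟩ := hmaj G hGm hmod
  have hGae : ∀ᵐ y : Rn n, G y ≠ ∞ := by
    filter_upwards [ae_lt_top' (hGm.pow h.meas).aemeasurable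
      (ne_top_of_le_ne_top one_ne_top hmod)] with y hy h0
    rw [h0, ENNReal.top_rpow_of_pos (h.pos y)] at hy
    exact lt_irrefl _ hy
  have hfG : ∀ ν y, f ν y ≤ G y := fun ν y => le_lqR (hQ.pos y) (fun ν => f ν y) ν
  set g : ℕ → Rn n → ℝ≥0∞ := fun ν y => f ν y / G y with hg
  have hgm : ∀ ν, Measurable (g ν) := fun ν => (hf ν).div hGm
  have hg1 : ∀ ν y, g ν y ≤ 1 := fun ν y =>
    ENNReal.div_le_of_le_mul (by rw [one_mul]; exact hfG ν y)
  have hconv : ∀ ν x, lconv (etaK ν m) (f ν) x = lconv (etaK ν m) (fun y => g ν y * G y) x := by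
    intro ν x
    refine lintegral_congr_ae ?_
    filter_upwards [hGae] with y hy
    congr 1
    rcases eq_or_ne (G y) 0 with h0 | h0
    · have : f ν y = 0 := le_zero_iff.1 (h0 ▸ hfG ν y)
      rw [this, h0, mul_zero]
    · exact (ENNReal.div_mul_cancel h0 hy).symm
  have hgsum : ∀ y, ∑' ν, g ν y ^ Q y * G y ≤ G y := by
    intro y
    rw [ENNReal.tsum_mul_right]
    refine mul_le_of_le_one_left zero_le ?_
    have h1 : ∀ ν, g ν y ^ Q y = f ν y ^ Q y * (G y ^ Q y)⁻¹ := fun ν => by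
      rw [← div_eq_mul_inv]
      exact ENNReal.div_rpow_of_nonneg _ _ (hQ.pos y).le
    simp_rw [h1]
    rw [ENNReal.tsum_mul_right, ← lqR_rpow (hQ.pos y), ← div_eq_mul_inv]
    exact ENNReal.div_self_le_one
  have hbm : ∀ ν, Measurable fun y => g ν y ^ Q y * G y := fun ν =>
    ((hgm ν).pow hQ.meas).mul hGm
  have hB := hsum _ G hbm hGm hgsum hmod
  have hT : ∀ ν x, lconv (etaK ν m') G x ≤ C₂ * A * G' x := fun ν x =>
    calc lconv (etaK ν m') G x ≤ lconv (etaK ν m') G' x := lconv_mono hGG' x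
      _ ≤ C₂ * dyMax G' x := hk ν G' hG'm x
      _ ≤ C₂ * (A * G' x) := mul_le_mul_right (hMG' x) _
      _ = _ := (mul_assoc _ _ _).symm
  have hfin := hpt (C₂ * A) g G G' hgm hGm hg1 hT
  calc ∫⁻ x, (lqR (Q x) fun ν => lconv (etaK ν m) (f ν) x) ^ P x
      ≤ ∫⁻ x, (K * (G' x + ∑' ν, lconv (etaK ν m') (fun y => g ν y ^ Q y * G y) x)) ^ P x := by
        refine lintegral_mono fun x => ENNReal.rpow_le_rpow ?_ (h.pos x).le
        simp_rw [hconv]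
        exact (hfin x).trans (mul_le_mul_left le_add_self _)
    _ ≤ K ^ b * ∫⁻ x, (G' x + ∑' ν, lconv (etaK ν m') (fun y => g ν y ^ Q y * G y) x) ^ P x :=
        h.lintegral_const_mul_rpow_le le_self_add hKt _
    _ ≤ K ^ b * (2 ^ b * (C₁ + C₃)) := by
        refine mul_le_mul_right ((h.lintegral_add_rpow_le hG'm _).trans ?_) _
        gcongr

/-- The power `r^{-α}` for small radii and `r^{-β}` for large radii. -/
def ballWt (α β r : ℝ) : ℝ := if r ≤ 1 then r ^ (-α) else r ^ (-β)

lemma ballWt_pos {r : ℝ} (hr : 0 < r) (α β : ℝ) : 0 < ballWt α β r := by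
  unfold ballWt
  split_ifs <;> positivity

lemma ballWt_mul_ballWt {r : ℝ} (hr : 0 < r) (α β α' β' : ℝ) :
    ballWt α β r * ballWt α' β' r = ballWt (α + α') (β + β') r := by
  unfold ballWt
  split_ifs
  · rw [← Real.rpow_add hr]; congr 1; ring
  · rw [← Real.rpow_add hr]; congr 1; ring

lemma rpow_mul_ballWt_le {σ r e α β γ ε : ℝ} (hσ : 1 ≤ σ) (hr : 0 < r) (hγ : 0 ≤ γ)
    (h1 : e + ε ≤ α) (h2 : e + ε ≤ γ + β) :
    σ ^ e * ballWt α (γ + β) (σ * r) ≤ σ ^ (-ε) * ballWt α β r := by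
  have hσ0 : 0 < σ := by linarith
  have hRr : r ≤ σ * r := le_mul_of_one_le_left hr.le hσ
  unfold ballWt
  rcases le_or_gt (σ * r) 1 with hR | hR
  · rw [if_pos hR, if_pos (hRr.trans hR), Real.mul_rpow hσ0.le hr.le, ← mul_assoc,
      ← Real.rpow_add hσ0]
    gcongr
    linarith
  · rw [if_neg hR.not_ge]
    rcases le_or_gt r 1 with hr1 | hr1
    · rw [if_pos hr1]
      calc σ ^ e * (σ * r) ^ (-(γ + β)) ≤ σ ^ e * (σ * r) ^ (-(e + ε)) := by
            gcongr
            exact hR.le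
        _ = σ ^ (-ε) * r ^ (-(e + ε)) := by
            rw [Real.mul_rpow hσ0.le hr.le, ← mul_assoc, ← Real.rpow_add hσ0]
            congr 2; ring
        _ ≤ σ ^ (-ε) * r ^ (-α) := by
            refine mul_le_mul_of_nonneg_left ?_ (by positivity)
            exact Real.rpow_le_rpow_of_exponent_ge hr hr1 (by linarith)
    · rw [if_neg hr1.not_ge]
      calc σ ^ e * (σ * r) ^ (-(γ + β))
          = σ ^ (e + (-(γ + β))) * (r ^ (-γ) * r ^ (-β)) := by
            rw [Real.mul_rpow hσ0.le hr.le, ← mul_assoc, ← Real.rpow_add hσ0,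
              ← Real.rpow_add hr]
            congr 2; ring
        _ ≤ σ ^ (-ε) * (1 * r ^ (-β)) := by
            gcongr
            · linarith
            · exact Real.rpow_le_one_of_one_le_of_nonpos hr1.le (by linarith)
        _ = _ := by rw [one_mul]

namespace DecExp

variable {P : Rn n → ℝ} {Pi a b c : ℝ}

/-- Upper bound for the norm of indicator functions of balls. -/
lemma setLIntegral_ballWt_le (h : DecExp P Pi a b c) : ∃ C : ℝ≥0∞, C ≠ ∞ ∧
    ∀ (x₀ : Rn n) (r : ℝ), 0 < r →
      ∫⁻ x in Metric.ball x₀ r, ENNReal.ofReal (ballWt (n / P x₀) (n / Pi) r) ^ P x ≤ C := by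
  set V := volume (Metric.ball (0 : Rn n) 1) with hV
  have hVt : V ≠ ∞ := volume_unitBall_ne_top
  set I := ∫⁻ x : Rn n, decWeight x with hI
  have hIt : I ≠ ∞ := lintegral_decWeight_ne_top
  refine ⟨ENNReal.ofReal (Real.exp (n * c)) * V +
    (ENNReal.ofReal (Real.exp ((n + 1) * c)) * V + I), by finiteness, fun x₀ r hr => ?_⟩
  have hvol : volume (Metric.ball x₀ r) = ENNReal.ofReal (r ^ n) * V := by
    have := Measure.addHaar_ball_of_pos (volume : Measure (Rn n)) x₀ hr
    simpa using this
  have hrr : ENNReal.ofReal (r ^ (-(n : ℝ))) * (ENNReal.ofReal (r ^ n) * V) = V := by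
    rw [← mul_assoc, ← ENNReal.ofReal_mul (by positivity), ← Real.rpow_natCast,
      ← Real.rpow_add hr]
    simp
  have hpow : ∀ {e : ℝ}, 0 < e →
      ENNReal.ofReal (r ^ (-((n : ℝ) / e))) ^ e = ENNReal.ofReal (r ^ (-(n : ℝ))) := by
    intro e he
    rw [ENNReal.ofReal_rpow_of_pos (by positivity), ← Real.rpow_mul hr.le]
    congr 2
    field_simp
  unfold ballWt
  split_ifs with hr1
  · refine le_trans ?_ le_self_add
    set t : ℝ≥0∞ := ENNReal.ofReal (r ^ (-(n / P x₀))) with ht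
    have hri : 1 ≤ r⁻¹ := (one_le_inv₀ hr).2 hr1
    have htpos : 0 < r ^ (-(n / P x₀)) := by positivity
    have hP0 := h.pos x₀
    have hexp : n / P x₀ ≤ (n : ℝ) := div_le_self n.cast_nonneg (h.one_lt' x₀).le
    have h1 : t ≤ 1 * ENNReal.ofReal (Real.exp 1 + r⁻¹) ^ (n : ℝ) := by
      rw [one_mul, ENNReal.ofReal_rpow_of_pos (by positivity), ht]
      refine ENNReal.ofReal_le_ofReal ?_
      rw [Real.rpow_neg hr.le, ← Real.inv_rpow hr.le]
      calc r⁻¹ ^ (n / P x₀) ≤ r⁻¹ ^ (n : ℝ) := Real.rpow_le_rpow_of_exponent_le hri hexp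
        _ ≤ _ := by
          gcongr
          linarith [Real.exp_pos 1]
    have ht1 : 1 ≤ t := by
      refine ENNReal.one_le_ofReal.2 ?_
      rw [Real.rpow_neg hr.le, ← Real.inv_rpow hr.le]
      exact Real.one_le_rpow hri (by positivity)
    have h2 : t⁻¹ ≤ 1 * ENNReal.ofReal (Real.exp 1 + r⁻¹) ^ (n : ℝ) :=
      ((ENNReal.inv_le_one.2 ht1).trans ht1).trans h1
    have hpt : ∀ x ∈ Metric.ball x₀ r,
        t ^ P x ≤ ENNReal.ofReal (Real.exp (n * c)) * ENNReal.ofReal (r ^ (-(n : ℝ))) := by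
      intro x hx
      rw [← hpow hP0]
      refine rpow_le_mul_rpow_of_sub (one_pos.trans_le ht1).ne' ENNReal.ofReal_ne_top ?_
      have := h.toLocExp.rpow_comparison le_rfl n.cast_nonneg hr
        (Metric.mem_ball.1 hx).le h1 h2
      rwa [ENNReal.one_rpow, one_mul] at this
    refine (setLIntegral_mono' measurableSet_ball hpt).trans ?_
    rw [setLIntegral_const, hvol, mul_assoc, hrr]
  · refine le_trans ?_ le_add_self
    have hr1' : 1 ≤ r := (not_le.1 hr1).le
    have hPi : 0 < Pi := one_pos.trans h.one_lt_inf
    have ht1 : ENNReal.ofReal (r ^ (-(n / Pi))) ≤ 1 := by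
      refine ENNReal.ofReal_le_one.2 (Real.rpow_le_one_of_one_le_of_nonpos hr1' ?_)
      have : 0 ≤ n / Pi := by positivity
      linarith
    calc ∫⁻ x in Metric.ball x₀ r, ENNReal.ofReal (r ^ (-(n / Pi))) ^ P x
        ≤ ∫⁻ x in Metric.ball x₀ r, (ENNReal.ofReal (Real.exp ((n + 1) * c)) *
            ENNReal.ofReal (r ^ (-(n : ℝ))) + decWeight x) := by
          refine lintegral_mono fun x => ?_
          rw [← hpow hPi]
          exact (h.rpow_le_rpow_inf ht1 x).1
      _ ≤ _ := by
          rw [lintegral_add_left measurable_const, setLIntegral_const, hvol, mul_assoc, hrr]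
          gcongr
          exact setLIntegral_le_lintegral _ _

/-- A Hölder inequality on balls. -/
lemma setLIntegral_ball_le (h : DecExp P Pi a b c) : ∃ C : ℝ≥0∞, C ≠ ∞ ∧
    ∀ (x₀ : Rn n) (r : ℝ) (g : Rn n → ℝ≥0∞), 0 < r → Measurable g →
      ∫⁻ x in Metric.ball x₀ r, g x ^ P x ≤ 1 →
        ∫⁻ x in Metric.ball x₀ r, g x ≤
          C * ENNReal.ofReal (r ^ (n : ℝ) * ballWt (n / P x₀) (n / Pi) r) := by
  obtain ⟨C, hC, hball⟩ := h.conj.setLIntegral_ballWt_le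
  refine ⟨1 + C, by finiteness, fun x₀ r g hr hg hg1 => ?_⟩
  have hconj : ∀ {e : ℝ}, 1 < e → (n : ℝ) / Real.conjExponent e + n / e = n := by
    intro e he
    have h1 : e - 1 ≠ 0 := by linarith
    have h2 : e ≠ 0 := by linarith
    unfold Real.conjExponent
    field_simp
    ring
  have hwt : ballWt (n / Real.conjExponent (P x₀)) (n / Real.conjExponent Pi) r *
      (r ^ (n : ℝ) * ballWt (n / P x₀) (n / Pi) r) = 1 := by
    rw [mul_left_comm, ballWt_mul_ballWt hr, hconj (h.one_lt' x₀), hconj h.one_lt_inf]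
    unfold ballWt
    rw [ite_self, ← Real.rpow_add hr]
    simp
  have hb := hball x₀ r hr
  set w : ℝ≥0∞ := ENNReal.ofReal
    (ballWt (n / Real.conjExponent (P x₀)) (n / Real.conjExponent Pi) r) with hw
  have hwr : w * ENNReal.ofReal (r ^ (n : ℝ) * ballWt (n / P x₀) (n / Pi) r) = 1 := by
    rw [hw, ← ENNReal.ofReal_mul (ballWt_pos hr _ _).le, hwt, ENNReal.ofReal_one]
  set z : ℝ≥0∞ := ENNReal.ofReal (r ^ (n : ℝ) * ballWt (n / P x₀) (n / Pi) r) with hz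
  calc ∫⁻ x in Metric.ball x₀ r, g x
      = (∫⁻ x in Metric.ball x₀ r, g x * w) * z := by
        rw [lintegral_mul_const _ hg, mul_assoc, hwr, mul_one]
    _ ≤ (∫⁻ x in Metric.ball x₀ r, (g x ^ P x + w ^ Real.conjExponent (P x))) * z := by
        refine mul_le_mul_left (lintegral_mono fun x => ?_) _
        exact ENNReal.mul_le_rpow_add_rpow_conj _ _ (h.one_lt' x)
    _ ≤ (1 + C) * z := by
        rw [lintegral_add_left (hg.pow h.meas)]
        gcongr

end DecExp

lemma etaK_le_of_le_norm (ν : ℕ) {m : ℝ} (hm : 0 ≤ m) {z : Rn n} {ρ : ℝ} (hρ : 0 ≤ ρ)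
    (hz : ρ ≤ ‖z‖) : etaK ν m z ≤ ENNReal.ofReal (2 ^ (ν * n) * (1 + 2 ^ ν * ρ) ^ (-m)) := by
  unfold etaK
  refine ENNReal.ofReal_le_ofReal ?_
  refine mul_le_mul_of_nonneg_left ?_ (by positivity)
  refine Real.rpow_le_rpow_of_nonpos (by positivity) ?_ (by linarith)
  gcongr

/-- Decay of the sum of the kernels at infinity. -/
lemma tsum_etaK_le_rpow_neg (n : ℕ) {m : ℝ} (hm : n < m) : ∃ C : ℝ≥0∞, C ≠ ∞ ∧
    ∀ (ρ : ℝ) (z : Rn n), 0 < ρ → ρ ≤ ‖z‖ →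
      ∑' ν, etaK ν m z ≤ C * ENNReal.ofReal (ρ ^ (-m)) := by
  have hm0 : 0 ≤ m := (n.cast_nonneg.trans_lt hm).le
  set θ : ℝ≥0∞ := ENNReal.ofReal (2 ^ (-(m - n))) with hθ
  have hθ1 : θ < 1 := by
    rw [hθ, ← ENNReal.ofReal_one, ENNReal.ofReal_lt_ofReal_iff one_pos]
    exact Real.rpow_lt_one_of_one_lt_of_neg one_lt_two (by linarith)
  have hsum : ∑' j : ℕ, θ ^ j ≠ ∞ := by
    rw [ENNReal.tsum_geometric]
    simpa [tsub_eq_zero_iff_le] using hθ1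
  refine ⟨∑' j : ℕ, θ ^ j, hsum, fun ρ z hρ hz => ?_⟩
  rw [← ENNReal.tsum_mul_right]
  refine ENNReal.tsum_le_tsum fun ν => (etaK_le_of_le_norm ν hm0 hρ.le hz).trans ?_
  rw [hθ, ← ENNReal.ofReal_pow (by positivity), ← ENNReal.ofReal_mul (by positivity)]
  refine ENNReal.ofReal_le_ofReal ?_
  calc (2 : ℝ) ^ (ν * n) * (1 + 2 ^ ν * ρ) ^ (-m) ≤ 2 ^ (ν * n) * (2 ^ ν * ρ) ^ (-m) := by
        refine mul_le_mul_of_nonneg_left ?_ (by positivity)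
        exact Real.rpow_le_rpow_of_nonpos (by positivity) (by linarith) (by linarith)
    _ = _ := by
        rw [Real.mul_rpow (by positivity) hρ.le, ← mul_assoc]
        congr 1
        simp only [← Real.rpow_natCast, ← Real.rpow_mul zero_le_two, ← Real.rpow_add two_pos]
        congr 1
        push_cast
        ring

/-- The sum of the kernels is bounded by `|z|^{-n}`. -/
lemma tsum_etaK_le_rpow_neg_dim {n : ℕ} (hn : 0 < n) {m : ℝ} (hm : n < m) :
    ∃ C : ℝ≥0∞, C ≠ ∞ ∧ ∀ (ρ : ℝ) (z : Rn n), 0 < ρ → ρ ≤ ‖z‖ →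
      ∑' ν, etaK ν m z ≤ C * ENNReal.ofReal (ρ ^ (-(n : ℝ))) := by
  have hn' : (0 : ℝ) < n := by exact_mod_cast hn
  have hm0 : 0 ≤ m := (n.cast_nonneg.trans_lt hm).le
  set σ : ℝ := min n (m - n) with hσ
  have hσ0 : 0 < σ := lt_min hn' (by linarith)
  set θ : ℝ≥0∞ := 2 ^ (-σ) with hθ
  have hθ1 : θ < 1 := two_rpow_neg_lt_one hσ0
  refine ⟨2 ^ σ * ∑' i : ℤ, θ ^ i.natAbs,
    ENNReal.mul_ne_top (two_rpow_ne_top σ) (tsum_int_geometric_ne_top hθ1), fun ρ z hρ hz => ?_⟩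
  obtain ⟨j, hj1, hj2⟩ := exists_mem_Ico_zpow (y := (2 : ℝ)) hρ one_lt_two
  have hterm : ∀ ν : ℕ, etaK ν m z ≤
      2 ^ σ * θ ^ ((ν : ℤ) + j).natAbs * ENNReal.ofReal (ρ ^ (-(n : ℝ))) := by
    intro ν
    refine (etaK_le_of_le_norm ν hm0 hρ.le hz).trans ?_
    set s : ℝ := 2 ^ ν * ρ with hs
    have hs0 : 0 < s := by positivity
    have hs1 : (2 : ℝ) ^ ((ν : ℤ) + j) ≤ s := by
      rw [zpow_add₀ two_ne_zero, zpow_natCast]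
      exact mul_le_mul_of_nonneg_left hj1 (by positivity)
    have hs2 : s ≤ (2 : ℝ) ^ ((ν : ℤ) + j + 1) := by
      rw [add_assoc, zpow_add₀ two_ne_zero, zpow_natCast]
      exact mul_le_mul_of_nonneg_left hj2.le (by positivity)
    have hreal : s ^ (n : ℝ) * (1 + s) ^ (-m) ≤
        2 ^ σ * (2 : ℝ) ^ (-(σ * ((ν : ℤ) + j).natAbs)) := by
      rw [← Real.rpow_add two_pos]
      rcases le_or_gt 0 ((ν : ℤ) + j) with hi | hi
      · have hsge : 1 ≤ s := (one_le_zpow₀ one_le_two hi).trans hs1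
        have hcast : ((((ν : ℤ) + j).natAbs : ℕ) : ℝ) = (((ν : ℤ) + j : ℤ) : ℝ) := by
          rw [Nat.cast_natAbs, abs_of_nonneg hi]
        calc s ^ (n : ℝ) * (1 + s) ^ (-m) ≤ s ^ (n : ℝ) * s ^ (-m) := by
              refine mul_le_mul_of_nonneg_left ?_ (by positivity)
              exact Real.rpow_le_rpow_of_nonpos hs0 (by linarith) (by linarith)
          _ = s ^ (n - m) := by rw [← Real.rpow_add hs0]; congr 1
          _ ≤ s ^ (-σ) := Real.rpow_le_rpow_of_exponent_le hsge
              (by linarith [min_le_right (n : ℝ) (m - n)])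
          _ ≤ ((2 : ℝ) ^ ((ν : ℤ) + j)) ^ (-σ) :=
              Real.rpow_le_rpow_of_nonpos (by positivity) hs1 (by linarith)
          _ = 2 ^ (-(σ * (((ν : ℤ) + j : ℤ) : ℝ))) := by
              rw [← Real.rpow_intCast, ← Real.rpow_mul zero_le_two]; congr 1; ring
          _ ≤ _ := by
              rw [hcast]
              refine Real.rpow_le_rpow_of_exponent_le one_le_two (by linarith)
      · have hsle : s ≤ 1 := hs2.trans (zpow_le_one_of_nonpos₀ one_le_two (by omega))
        have hcast : ((((ν : ℤ) + j).natAbs : ℕ) : ℝ) = -(((ν : ℤ) + j : ℤ) : ℝ) := by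
          rw [Nat.cast_natAbs, abs_of_neg hi]; push_cast; ring
        calc s ^ (n : ℝ) * (1 + s) ^ (-m) ≤ s ^ (n : ℝ) * 1 := by
              refine mul_le_mul_of_nonneg_left ?_ (by positivity)
              exact Real.rpow_le_one_of_one_le_of_nonpos (by linarith) (by linarith)
          _ ≤ s ^ σ := by
              rw [mul_one]
              exact Real.rpow_le_rpow_of_exponent_ge hs0 hsle (min_le_left _ _)
          _ ≤ ((2 : ℝ) ^ ((ν : ℤ) + j + 1)) ^ σ := by gcongr
          _ = 2 ^ (σ * ((((ν : ℤ) + j : ℤ) : ℝ) + 1)) := by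
              rw [← Real.rpow_intCast, ← Real.rpow_mul zero_le_two]
              congr 1; push_cast; ring
          _ ≤ _ := by
              rw [hcast]
              refine Real.rpow_le_rpow_of_exponent_le one_le_two (by linarith)
    have hpow2 : (2 : ℝ≥0∞) ^ σ * θ ^ ((ν : ℤ) + j).natAbs =
        ENNReal.ofReal (2 ^ σ * (2 : ℝ) ^ (-(σ * ((ν : ℤ) + j).natAbs))) := by
      rw [ENNReal.ofReal_mul (by positivity), ← ENNReal.ofReal_rpow_of_pos two_pos,
        ← ENNReal.ofReal_rpow_of_pos two_pos, hθ, ← ENNReal.rpow_natCast, ← ENNReal.rpow_mul]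
      simp
    rw [hpow2, ← ENNReal.ofReal_mul (by positivity)]
    refine ENNReal.ofReal_le_ofReal ?_
    calc (2 : ℝ) ^ (ν * n) * (1 + s) ^ (-m)
        = s ^ (n : ℝ) * (1 + s) ^ (-m) * ρ ^ (-(n : ℝ)) := by
          rw [hs, Real.mul_rpow (by positivity) hρ.le, Real.rpow_neg hρ.le, pow_mul,
            ← Real.rpow_natCast (2 ^ ν) n]
          field_simp
      _ ≤ _ := by gcongr
  calc ∑' ν, etaK ν m z
      ≤ ∑' ν : ℕ, 2 ^ σ * θ ^ ((ν : ℤ) + j).natAbs * ENNReal.ofReal (ρ ^ (-(n : ℝ))) :=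
        ENNReal.tsum_le_tsum hterm
    _ = 2 ^ σ * (∑' ν : ℕ, θ ^ ((ν : ℤ) + j).natAbs) * ENNReal.ofReal (ρ ^ (-(n : ℝ))) := by
        rw [ENNReal.tsum_mul_right, ENNReal.tsum_mul_left]
    _ ≤ _ := by
        gcongr
        exact ENNReal.tsum_comp_le_tsum_of_injective
          ((add_left_injective j).comp Nat.cast_injective) fun i : ℤ => θ ^ i.natAbs

lemma lqR_const_mul {s : ℝ} (hs : 0 < s) (k : ℝ≥0∞) (a : ℕ → ℝ≥0∞) :
    lqR s (fun ν => k * a ν) = k * lqR s a := by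
  unfold lqR
  simp_rw [ENNReal.mul_rpow_of_nonneg _ _ hs.le, ENNReal.tsum_mul_left]
  rw [ENNReal.mul_rpow_of_nonneg _ _ (by positivity), one_div, ENNReal.rpow_rpow_inv hs.ne']

lemma ENNReal.tsum_rpow_le_rpow_tsum {s : ℝ} (hs : 1 ≤ s) (a : ℕ → ℝ≥0∞) :
    ∑' ν, a ν ^ s ≤ (∑' ν, a ν) ^ s := by
  have hsplit : ∀ t : ℝ≥0∞, t ^ s = t * t ^ (s - 1) := by
    intro t
    conv_lhs => rw [← add_sub_cancel 1 s,
      ENNReal.rpow_add_of_nonneg _ _ zero_le_one (by linarith), ENNReal.rpow_one]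
  rw [hsplit (∑' ν, a ν), ← ENNReal.tsum_mul_right]
  refine ENNReal.tsum_le_tsum fun ν => ?_
  rw [hsplit]
  exact mul_le_mul_right (ENNReal.rpow_le_rpow (ENNReal.le_tsum ν) (by linarith)) _

lemma lqR_add_le {s : ℝ} (hs : 1 ≤ s) (a b : ℕ → ℝ≥0∞) :
    lqR s (fun ν => a ν + b ν) ≤ 2 * (lqR s a + ∑' ν, b ν) := by
  have hs0 : 0 < s := by linarith
  conv_lhs => unfold lqR
  rw [one_div, ENNReal.rpow_inv_le_iff hs0, ENNReal.mul_rpow_of_nonneg _ _ hs0.le]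
  calc ∑' ν, (a ν + b ν) ^ s ≤ ∑' ν, 2 ^ s * (a ν ^ s + b ν ^ s) := by
        refine ENNReal.tsum_le_tsum fun ν => ?_
        refine (ENNReal.rpow_add_le_mul_rpow_add_rpow _ _ hs).trans ?_
        exact mul_le_mul_left (ENNReal.rpow_le_rpow_of_exponent_le one_le_two (by linarith)) _
    _ = 2 ^ s * (lqR s a ^ s + ∑' ν, b ν ^ s) := by
        rw [ENNReal.tsum_mul_left, ENNReal.tsum_add, lqR_rpow hs0]
    _ ≤ 2 ^ s * (lqR s a ^ s + (∑' ν, b ν) ^ s) := by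
        gcongr
        exact ENNReal.tsum_rpow_le_rpow_tsum hs b
    _ ≤ _ := mul_le_mul_right (ENNReal.add_rpow_le_rpow_add _ _ hs) _

/-- Bound for the sum of the kernels away from the origin. -/
lemma tsum_etaK_le_ballWt {n : ℕ} (hn : 0 < n) {m : ℝ} (hm : n < m) :
    ∃ C : ℝ≥0∞, C ≠ ∞ ∧ ∀ (R : ℝ) (z : Rn n), 0 < R → R / 4 ≤ ‖z‖ →
      ∑' ν, etaK ν m z ≤ C * ENNReal.ofReal (ballWt n m R) := by
  obtain ⟨C₁, hC₁, h₁⟩ := tsum_etaK_le_rpow_neg_dim hn hm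
  obtain ⟨C₂, hC₂, h₂⟩ := tsum_etaK_le_rpow_neg n hm
  have hscale : ∀ (R e : ℝ), 0 < R → ENNReal.ofReal ((R / 4) ^ (-e)) =
      ENNReal.ofReal (4 ^ e) * ENNReal.ofReal (R ^ (-e)) := by
    intro R e hR
    rw [← ENNReal.ofReal_mul (by positivity), Real.div_rpow hR.le (by norm_num),
      Real.rpow_neg (by norm_num : (0 : ℝ) ≤ 4), div_inv_eq_mul, mul_comm]
  refine ⟨C₁ * ENNReal.ofReal (4 ^ (n : ℝ)) + C₂ * ENNReal.ofReal (4 ^ m), by finiteness,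
    fun R z hR hz => ?_⟩
  unfold ballWt
  split_ifs
  · refine (h₁ _ z (by positivity) hz).trans ?_
    rw [hscale R n hR, ← mul_assoc]
    exact mul_le_mul_left le_self_add _
  · refine (h₂ _ z (by positivity) hz).trans ?_
    rw [hscale R m hR, ← mul_assoc]
    exact mul_le_mul_left le_add_self _

namespace DecExp

variable {P Q : Rn n → ℝ} {Pi a b c a' b' c' m ε : ℝ}

/-- Estimate for the part of the convolution that is far away from a ball. -/
lemma setLIntegral_compl_ball_le (h : DecExp P Pi a b c) (hn : 0 < n) (hm : n < m)
    (hε : 0 < ε) : ∃ C : ℝ≥0∞, C ≠ ∞ ∧ ∀ (x₀ x : Rn n) (r e : ℝ) (g : Rn n → ℝ≥0∞), 0 < r →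
      e + ε ≤ n / P x₀ → e + ε ≤ (m - n) + n / Pi → Measurable g →
      (∀ R : ℝ, 0 < R →
        ∫⁻ y in Metric.ball x₀ R, (ENNReal.ofReal (R ^ (-e)) * g y) ^ P y ≤ 1) →
      x ∈ Metric.ball x₀ r →
        ∫⁻ y in (Metric.ball x₀ (2 * r))ᶜ, (∑' ν, etaK ν m (x - y)) * g y ≤
          C * ENNReal.ofReal (r ^ e * ballWt (n / P x₀) (n / Pi) r) := by
  obtain ⟨K, hK, hker⟩ := tsum_etaK_le_ballWt hn hm
  obtain ⟨C, hC, hhol⟩ := h.setLIntegral_ball_le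
  set θ : ℝ≥0∞ := 2 ^ (-ε) with hθ
  have hθ1 : θ < 1 := two_rpow_neg_lt_one hε
  have hsum : ∑' j : ℕ, θ ^ j ≠ ∞ := by
    rw [ENNReal.tsum_geometric]
    simpa [tsub_eq_zero_iff_le] using hθ1
  refine ⟨K * C * ∑' j : ℕ, θ ^ j, by finiteness, ?_⟩
  intro x₀ x r e g hr he1 he2 hg hmod hx
  set Ann : ℕ → Set (Rn n) := fun k =>
    {y | 2 ^ (k + 1) * r ≤ dist y x₀ ∧ dist y x₀ < 2 ^ (k + 2) * r} with hAnn
  have hcover : (Metric.ball x₀ (2 * r))ᶜ ⊆ ⋃ k, Ann k := by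
    intro y hy
    have hy' : 2 * r ≤ dist y x₀ := by simpa using hy
    obtain ⟨k, hk1, hk2⟩ := exists_nat_pow_near (x := dist y x₀ / (2 * r)) (y := (2 : ℝ))
      ((one_le_div (by positivity)).2 hy') one_lt_two
    rw [le_div_iff₀ (by positivity)] at hk1
    rw [div_lt_iff₀ (by positivity)] at hk2
    refine Set.mem_iUnion.2 ⟨k, ?_, ?_⟩
    · rw [pow_succ]; linarith
    · rw [pow_succ]; linarith
  have hann : ∀ k, ∫⁻ y in Ann k, (∑' ν, etaK ν m (x - y)) * g y ≤
      K * C * θ ^ k * ENNReal.ofReal (r ^ e * ballWt (n / P x₀) (n / Pi) r) := by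
    intro k
    set σ : ℝ := 2 ^ (k + 2) with hσ
    have hσ1 : 1 ≤ σ := one_le_pow₀ one_le_two
    have hσ0 : 0 < σ := by linarith
    set R : ℝ := σ * r with hR
    have hR0 : 0 < R := by positivity
    have hkerk : ∀ y ∈ Ann k, (∑' ν, etaK ν m (x - y)) * g y ≤
        K * ENNReal.ofReal (ballWt n m R) * g y := by
      intro y hy
      refine mul_le_mul_left (hker R (x - y) hR0 ?_) _
      have h1 : R / 2 ≤ dist y x₀ := by
        refine le_trans (le_of_eq ?_) hy.1
        rw [hR, hσ]; ring
      have h2 : r ≤ R / 4 := by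
        have : (1 : ℝ) ≤ 2 ^ k := one_le_pow₀ one_le_two
        rw [hR, hσ, pow_add]
        nlinarith
      have h3 := dist_triangle y x x₀
      have h4 : dist x x₀ < r := hx
      rw [dist_comm y x, dist_eq_norm x y] at h3
      linarith
    have hgR : ∫⁻ y in Metric.ball x₀ R, g y ≤ ENNReal.ofReal (R ^ e) *
        (C * ENNReal.ofReal (R ^ (n : ℝ) * ballWt (n / P x₀) (n / Pi) R)) := by
      have h1 : ∀ y, g y = ENNReal.ofReal (R ^ e) * (ENNReal.ofReal (R ^ (-e)) * g y) := by
        intro y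
        rw [← mul_assoc, ← ENNReal.ofReal_mul (by positivity), ← Real.rpow_add hR0]
        simp
      rw [lintegral_congr h1, lintegral_const_mul _ (by fun_prop)]
      refine mul_le_mul_right ?_ _
      exact hhol x₀ R _ hR0 (by fun_prop) (hmod R hR0)
    have hreal : ballWt n m R * (R ^ e * (R ^ (n : ℝ) * ballWt (n / P x₀) (n / Pi) R)) ≤
        2 ^ (-(ε * k)) * (r ^ e * ballWt (n / P x₀) (n / Pi) r) := by
      have hRn : R ^ (n : ℝ) = ballWt (-(n : ℝ)) (-(n : ℝ)) R := by simp [ballWt]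
      have hcomb : ballWt n m R * (R ^ (n : ℝ) * ballWt (n / P x₀) (n / Pi) R) =
          ballWt (n / P x₀) ((m - n) + n / Pi) R := by
        rw [hRn, ballWt_mul_ballWt hR0, ballWt_mul_ballWt hR0]
        congr 1 <;> ring
      rw [mul_left_comm, hcomb, hR, Real.mul_rpow hσ0.le hr.le, mul_comm (σ ^ e), mul_assoc]
      calc r ^ e * (σ ^ e * ballWt (n / P x₀) ((m - n) + n / Pi) (σ * r))
          ≤ r ^ e * (σ ^ (-ε) * ballWt (n / P x₀) (n / Pi) r) :=
            mul_le_mul_of_nonneg_left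
              (rpow_mul_ballWt_le hσ1 hr (by linarith) he1 he2) (by positivity)
        _ ≤ r ^ e * (2 ^ (-(ε * k)) * ballWt (n / P x₀) (n / Pi) r) := by
            refine mul_le_mul_of_nonneg_left ?_ (by positivity)
            refine mul_le_mul_of_nonneg_right ?_ (ballWt_pos hr _ _).le
            rw [hσ, ← Real.rpow_natCast, ← Real.rpow_mul zero_le_two]
            refine Real.rpow_le_rpow_of_exponent_le one_le_two ?_
            push_cast
            nlinarith
        _ = _ := by ring
    have hθk : θ ^ k = ENNReal.ofReal (2 ^ (-(ε * k))) := by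
      rw [← ENNReal.ofReal_rpow_of_pos two_pos, hθ, ← ENNReal.rpow_natCast, ← ENNReal.rpow_mul]
      simp
    have hsub : Ann k ⊆ Metric.ball x₀ R := fun y hy => hy.2
    have hAnnm : MeasurableSet (Ann k) := by
      have h1 : Measurable fun y : Rn n => dist y x₀ := by fun_prop
      exact (measurableSet_le measurable_const h1).inter (measurableSet_lt h1 measurable_const)
    calc ∫⁻ y in Ann k, (∑' ν, etaK ν m (x - y)) * g y
        ≤ ∫⁻ y in Ann k, K * ENNReal.ofReal (ballWt n m R) * g y :=
          setLIntegral_mono' hAnnm hkerk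
      _ ≤ ∫⁻ y in Metric.ball x₀ R, K * ENNReal.ofReal (ballWt n m R) * g y :=
          lintegral_mono_set hsub
      _ = K * ENNReal.ofReal (ballWt n m R) * ∫⁻ y in Metric.ball x₀ R, g y :=
          lintegral_const_mul _ hg
      _ ≤ K * ENNReal.ofReal (ballWt n m R) * (ENNReal.ofReal (R ^ e) *
          (C * ENNReal.ofReal (R ^ (n : ℝ) * ballWt (n / P x₀) (n / Pi) R))) :=
          mul_le_mul_right hgR _
      _ = K * C * ENNReal.ofReal
          (ballWt n m R * (R ^ e * (R ^ (n : ℝ) * ballWt (n / P x₀) (n / Pi) R))) := by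
          rw [ENNReal.ofReal_mul (ballWt_pos hR0 _ _).le,
            ENNReal.ofReal_mul (by positivity : 0 ≤ R ^ e)]
          ring
      _ ≤ K * C * ENNReal.ofReal
          (2 ^ (-(ε * k)) * (r ^ e * ballWt (n / P x₀) (n / Pi) r)) :=
          mul_le_mul_right (ENNReal.ofReal_le_ofReal hreal) _
      _ = _ := by rw [ENNReal.ofReal_mul (by positivity), hθk, mul_assoc, mul_assoc, mul_assoc]
  calc ∫⁻ y in (Metric.ball x₀ (2 * r))ᶜ, (∑' ν, etaK ν m (x - y)) * g y
      ≤ ∫⁻ y in ⋃ k, Ann k, (∑' ν, etaK ν m (x - y)) * g y := lintegral_mono_set hcover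
    _ ≤ ∑' k, ∫⁻ y in Ann k, (∑' ν, etaK ν m (x - y)) * g y := lintegral_iUnion_le _ _
    _ ≤ ∑' k, K * C * θ ^ k * ENNReal.ofReal (r ^ e * ballWt (n / P x₀) (n / Pi) r) :=
        ENNReal.tsum_le_tsum hann
    _ = _ := by rw [ENNReal.tsum_mul_right, ENNReal.tsum_mul_left]

/-- The convolution inequality in variable exponent Morrey spaces, in modular form. -/
lemma morrey_lqR_lconv_le (h : DecExp P Pi a b c) (hQ : LocExp Q a' b' c') (hn : 0 < n)
    (hm : n < m) (hε : 0 < ε) {e : Rn n → ℝ} (he1 : ∀ x, e x + ε ≤ n / P x)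
    (he2 : ∀ x, e x + ε ≤ (m - n) + n / Pi) :
    ∃ C : ℝ≥0∞, C ≠ ∞ ∧ ∀ f : ℕ → Rn n → ℝ≥0∞, (∀ ν, Measurable (f ν)) →
      (∀ (x₀ : Rn n) (r : ℝ), 0 < r → ∫⁻ x in Metric.ball x₀ r,
        (ENNReal.ofReal (r ^ (-e x₀)) * lqR (Q x) fun ν => f ν x) ^ P x ≤ 1) →
      ∀ (x₀ : Rn n) (r : ℝ), 0 < r → ∫⁻ x in Metric.ball x₀ r,
        (ENNReal.ofReal (r ^ (-e x₀)) * lqR (Q x) fun ν => lconv (etaK ν m) (f ν) x) ^ P x ≤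
          C := by
  have hb := h.b_pos
  obtain ⟨C₁, hC₁, hnear⟩ := h.modular_lqR_lconv_le hQ hm
  obtain ⟨C₂, hC₂, hfar⟩ := h.setLIntegral_compl_ball_le hn hm hε
  obtain ⟨C₃, hC₃, hwt⟩ := h.setLIntegral_ballWt_le
  set K : ℝ≥0∞ := 2 ^ (n : ℝ) with hK
  have hK1 : 1 ≤ K := ENNReal.one_le_rpow one_le_two (by exact_mod_cast hn)
  have hKt : K ≠ ∞ := two_rpow_ne_top _
  have h2b := two_rpow_ne_top b
  refine ⟨2 ^ b * (2 ^ b * (K ^ b * C₁ + (1 + C₂) ^ b * C₃)), by finiteness, ?_⟩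
  intro f hf hmod x₀ r hr
  set g : Rn n → ℝ≥0∞ := fun y => lqR (Q y) fun ν => f ν y with hg
  have hgm : Measurable g := measurable_lqR hQ.meas hf
  set B := Metric.ball x₀ (2 * r) with hB
  have hBm : MeasurableSet B := measurableSet_ball
  set lam := ENNReal.ofReal (r ^ (-e x₀)) with hlam
  set μ := ENNReal.ofReal ((2 * r) ^ (-e x₀)) with hμ
  set v : ℕ → Rn n → ℝ≥0∞ := fun ν => B.indicator fun y => μ * f ν y with hv
  have hvm : ∀ ν, Measurable (v ν) := fun ν => ((hf ν).const_mul μ).indicator hBm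
  have hlamK : lam ≤ K * μ := by
    have hen : e x₀ ≤ n := by
      have : n / P x₀ ≤ (n : ℝ) := div_le_self n.cast_nonneg (h.one_lt' x₀).le
      linarith [he1 x₀]
    rw [hlam, hμ, hK, Real.mul_rpow zero_le_two hr.le, ENNReal.ofReal_mul (by positivity),
      ← mul_assoc]
    refine le_mul_of_one_le_left' ?_
    rw [← ENNReal.ofReal_ofNat 2, ENNReal.ofReal_rpow_of_pos two_pos,
      ← ENNReal.ofReal_mul (by positivity), ← Real.rpow_add two_pos]
    exact ENNReal.one_le_ofReal.2 (Real.one_le_rpow one_le_two (by linarith))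
  have hlam0 : lam * ENNReal.ofReal (r ^ e x₀) = 1 := by
    rw [hlam, ← ENNReal.ofReal_mul (by positivity), ← Real.rpow_add hr]
    simp
  have hvmod : ∫⁻ x, (lqR (Q x) fun ν => v ν x) ^ P x ≤ 1 := by
    refine le_trans (le_of_eq ?_) (hmod x₀ (2 * r) (by positivity))
    rw [← lintegral_indicator hBm]
    refine lintegral_congr fun x => ?_
    by_cases hx : x ∈ B
    · simp only [hv, Set.indicator_of_mem hx]
      rw [lqR_const_mul (hQ.pos x)]
    · simp only [hv, Set.indicator_of_notMem hx]
      simp [lqR, hQ.pos x, h.pos x]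
  have hpt : ∀ x ∈ Metric.ball x₀ r, (lam * lqR (Q x) fun ν => lconv (etaK ν m) (f ν) x) ^ P x ≤
      2 ^ b * (2 ^ b * (K ^ b * (lqR (Q x) fun ν => lconv (etaK ν m) (v ν) x) ^ P x +
        (1 + C₂) ^ b * ENNReal.ofReal (ballWt (n / P x₀) (n / Pi) r) ^ P x)) := by
    intro x hx
    have hP0 := h.pos x
    have hpow : ∀ (k : ℝ≥0∞), 1 ≤ k → ∀ s : ℝ≥0∞, (k * s) ^ P x ≤ k ^ b * s ^ P x := by
      intro k hk s
      rw [ENNReal.mul_rpow_of_nonneg _ _ hP0.le]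
      exact mul_le_mul_left (ENNReal.rpow_le_rpow_of_exponent_le hk (h.upper x)) _
    have hsplit : ∀ ν, lconv (etaK ν m) (f ν) x =
        lconv (etaK ν m) (B.indicator (f ν)) x + lconv (etaK ν m) (Bᶜ.indicator (f ν)) x := by
      intro ν
      rw [← lconv_add (measurable_etaK ν m) ((hf ν).indicator hBm)]
      congr 1
      funext y
      exact (Set.indicator_self_add_compl_apply B (f ν) y).symm
    have hfarx : ∑' ν, lconv (etaK ν m) (Bᶜ.indicator (f ν)) x ≤
        C₂ * ENNReal.ofReal (r ^ e x₀ * ballWt (n / P x₀) (n / Pi) r) := by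
      refine le_trans ?_
        (hfar x₀ x r (e x₀) g hr (he1 x₀) (he2 x₀) hgm (hmod x₀) hx)
      unfold lconv
      have hmeas : ∀ ν, Measurable fun y => etaK ν m (x - y) * Bᶜ.indicator (f ν) y :=
        fun ν => ((measurable_etaK ν m).comp (measurable_const.sub measurable_id)).mul
          ((hf ν).indicator hBm.compl)
      rw [← lintegral_tsum fun ν => (hmeas ν).aemeasurable, ← lintegral_indicator hBm.compl]
      refine lintegral_mono fun y => ?_
      by_cases hy : y ∈ Bᶜ
      · simp only [Set.indicator_of_mem hy]
        rw [← ENNReal.tsum_mul_right]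
        exact ENNReal.tsum_le_tsum fun ν =>
          mul_le_mul_right (le_lqR (hQ.pos y) (fun ν => f ν y) ν) _
      · simp [Set.indicator_of_notMem hy]
    have hnearx : lam * (lqR (Q x) fun ν => lconv (etaK ν m) (B.indicator (f ν)) x) ≤
        K * lqR (Q x) fun ν => lconv (etaK ν m) (v ν) x := by
      have : ∀ ν, lconv (etaK ν m) (v ν) x = μ * lconv (etaK ν m) (B.indicator (f ν)) x := by
        intro ν
        rw [← lconv_const_mul (measurable_etaK ν m) ((hf ν).indicator hBm)]
        congr 1
        funext y
        exact Set.indicator_const_mul B (f ν) μ y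
      simp_rw [this]
      rw [lqR_const_mul (hQ.pos x), ← mul_assoc]
      exact mul_le_mul_left hlamK _
    have hfarx' : lam * ∑' ν, lconv (etaK ν m) (Bᶜ.indicator (f ν)) x ≤
        (1 + C₂) * ENNReal.ofReal (ballWt (n / P x₀) (n / Pi) r) := by
      calc _ ≤ lam * (C₂ * ENNReal.ofReal (r ^ e x₀ * ballWt (n / P x₀) (n / Pi) r)) :=
            mul_le_mul_right hfarx _
        _ = C₂ * ENNReal.ofReal (ballWt (n / P x₀) (n / Pi) r) := by
            rw [ENNReal.ofReal_mul (by positivity), mul_left_comm, ← mul_assoc lam, hlam0,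
              one_mul]
        _ ≤ _ := mul_le_mul_left le_add_self _
    simp_rw [hsplit]
    calc _ ≤ (2 * (K * (lqR (Q x) fun ν => lconv (etaK ν m) (v ν) x) +
          (1 + C₂) * ENNReal.ofReal (ballWt (n / P x₀) (n / Pi) r))) ^ P x := by
          refine ENNReal.rpow_le_rpow ?_ hP0.le
          refine (mul_le_mul_right (lqR_add_le (hQ.one_lt' x).le _ _) lam).trans ?_
          rw [mul_left_comm, mul_add]
          exact mul_le_mul_right (add_le_add hnearx hfarx') _
      _ ≤ _ := by
          refine (hpow 2 one_le_two _).trans (mul_le_mul_right ?_ _)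
          refine (h.toLocExp.add_rpow_le x _ _).trans (mul_le_mul_right ?_ _)
          exact add_le_add (hpow K hK1 _) (hpow _ le_self_add _)
  have hUm : Measurable fun x => lqR (Q x) fun ν => lconv (etaK ν m) (v ν) x :=
    measurable_lqR hQ.meas fun ν => measurable_lconv (measurable_etaK ν m) (hvm ν)
  have hUm' := hUm.pow h.meas
  refine (setLIntegral_mono' measurableSet_ball hpt).trans ?_
  rw [lintegral_const_mul' _ _ h2b, lintegral_const_mul' _ _ h2b,
    lintegral_add_left (hUm'.const_mul _), lintegral_const_mul' _ _ (by finiteness),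
    lintegral_const_mul' _ _ (by finiteness)]
  refine mul_le_mul_right (mul_le_mul_right (add_le_add (mul_le_mul_right ?_ _)
    (mul_le_mul_right (hwt x₀ r hr) _)) _) _
  exact (setLIntegral_le_lintegral _ _).trans (hnear v hvm hvmod)

end DecExp

lemma LocLogHolder.continuous {g : Rn n → ℝ} (hg : LocLogHolder g) : Continuous g := by
  obtain ⟨c, hc, h⟩ := hg
  refine Metric.continuous_iff.2 fun y ε hε => ⟨Real.exp (-(c / ε)), Real.exp_pos _, ?_⟩
  intro x hx
  rcases eq_or_ne x y with rfl | hxy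
  · simpa using hε
  have hd : 0 < dist x y := dist_pos.2 hxy
  have h1 : Real.exp (c / ε) < (dist x y)⁻¹ := by
    rw [lt_inv_comm₀ (Real.exp_pos _) hd, ← Real.exp_neg]
    exact hx
  have h2 : c / ε < Real.log (Real.exp 1 + (dist x y)⁻¹) := by
    rw [Real.lt_log_iff_exp_lt (by positivity)]
    linarith [Real.exp_pos 1]
  have h3 : 0 < Real.log (Real.exp 1 + (dist x y)⁻¹) := (by positivity : 0 < c / ε).trans h2
  rw [Real.dist_eq]
  refine (h x y).trans_lt ?_
  rw [div_lt_iff₀ hε] at h2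
  rw [div_lt_iff₀ h3, mul_comm]
  exact h2

lemma log_exp_add_pos {s : ℝ} (hs : 0 ≤ s) : 0 < Real.log (Real.exp 1 + s) :=
  Real.log_pos (by linarith [Real.one_lt_exp_iff.2 one_pos])

/-- Almost everywhere bounds for a continuous exponent hold everywhere. -/
lemma exists_bounds_of_essInf {p : Rn n → ℝ≥0∞} (hg : LocLogHolder fun x => (p x)⁻¹.toReal)
    (hinf : 1 < essInf p (volume : Measure (Rn n)))
    (hsup : essSup p (volume : Measure (Rn n)) < ∞) :
    ∃ a b : ℝ, 1 < a ∧ ∀ x, p x ≠ ∞ ∧ a ≤ (p x).toReal ∧ (p x).toReal ≤ b := by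
  obtain ⟨a', ha1, ha2⟩ := ENNReal.lt_iff_exists_nnreal_btwn.1 hinf
  set b' := essSup p (volume : Measure (Rn n)) with hb'
  have ha : (1 : ℝ) < a' := by exact_mod_cast ha1
  have hae : ∀ᵐ x : Rn n, (a' : ℝ≥0∞) ≤ p x ∧ p x ≤ b' := by
    filter_upwards [ae_essInf_le (f := p) (μ := volume), ENNReal.ae_le_essSup p] with x h1 h2
    exact ⟨ha2.le.trans h1, h2⟩
  have hab : (a' : ℝ≥0∞) ≤ b' := by
    obtain ⟨x, hx⟩ := hae.exists
    exact hx.1.trans hx.2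
  have hab' : (a' : ℝ) ≤ b'.toReal := by
    rw [← ENNReal.coe_toReal a']
    exact ENNReal.toReal_mono hsup.ne hab
  have hb0 : 0 < b'.toReal := by linarith
  set G : Set (Rn n) := {x | b'.toReal⁻¹ ≤ (p x)⁻¹.toReal ∧ (p x)⁻¹.toReal ≤ (a' : ℝ)⁻¹} with hG
  have hGc : IsClosed G :=
    (isClosed_le continuous_const hg.continuous).inter (isClosed_le hg.continuous continuous_const)
  have hGae : ∀ᵐ x : Rn n, x ∈ G := by
    filter_upwards [hae] with x hx
    have hpt : p x ≠ ∞ := (hx.2.trans_lt hsup).ne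
    have hp1 : (a' : ℝ) ≤ (p x).toReal := by
      rw [← ENNReal.coe_toReal a']
      exact ENNReal.toReal_mono hpt hx.1
    have hp2 : (p x).toReal ≤ b'.toReal := ENNReal.toReal_mono hsup.ne hx.2
    have hp0 : 0 < (p x).toReal := by linarith
    constructor
    · rw [ENNReal.toReal_inv]
      exact inv_anti₀ hp0 hp2
    · rw [ENNReal.toReal_inv]
      exact inv_anti₀ (by linarith) hp1
  have hall : ∀ x, x ∈ G := by
    have : volume Gᶜ = 0 := hGae
    rw [hGc.isOpen_compl.measure_eq_zero_iff volume, Set.compl_empty_iff] at this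
    intro x
    rw [this]
    trivial
  refine ⟨a', b'.toReal, ha, fun x => ?_⟩
  obtain ⟨h1, h2⟩ := hall x
  rw [ENNReal.toReal_inv] at h1 h2
  have hp0 : 0 < (p x).toReal := by
    have : 0 < (p x).toReal⁻¹ := (inv_pos.2 hb0).trans_le h1
    exact inv_pos.1 this
  exact ⟨(ENNReal.toReal_pos_iff.1 hp0).2.ne, (inv_le_inv₀ hp0 (by linarith)).1 h2,
    (inv_le_inv₀ hb0 hp0).1 h1⟩

lemma abs_sub_le_sq_mul_abs_inv_sub {b s t : ℝ} (hs : 0 < s) (ht : 0 < t) (hsb : s ≤ b)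
    (htb : t ≤ b) : |s - t| ≤ b ^ 2 * |s⁻¹ - t⁻¹| := by
  have h1 : s - t = s * t * (t⁻¹ - s⁻¹) := by field_simp
  rw [h1, abs_mul, abs_of_pos (mul_pos hs ht), abs_sub_comm]
  refine mul_le_mul_of_nonneg_right ?_ (abs_nonneg _)
  nlinarith

lemma exists_locExp {p : Rn n → ℝ≥0∞} (hp : Measurable p)
    (hg : LocLogHolder fun x => (p x)⁻¹.toReal)
    (hinf : 1 < essInf p (volume : Measure (Rn n)))
    (hsup : essSup p (volume : Measure (Rn n)) < ∞) :
    (∀ x, p x ≠ ∞) ∧ ∃ a b c : ℝ, LocExp (fun x => (p x).toReal) a b c := by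
  obtain ⟨a, b, ha, hab⟩ := exists_bounds_of_essInf hg hinf hsup
  obtain ⟨c, hc, h⟩ := hg
  refine ⟨fun x => (hab x).1, a, b, b ^ 2 * c, hp.ennreal_toReal, ha, fun x => (hab x).2.1,
    fun x => (hab x).2.2, ?_⟩
  intro x y R hR hxy
  rcases eq_or_ne x y with rfl | hne
  · simp only [sub_self, abs_zero, zero_mul]
    positivity
  have hd : 0 < dist x y := dist_pos.2 hne
  have h0 : ∀ x, 0 < (p x).toReal := fun x => by linarith [(hab x).2.1]
  have h1 := abs_sub_le_sq_mul_abs_inv_sub (h0 x) (h0 y) (hab x).2.2 (hab y).2.2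
  have h2 := h x y
  simp only [ENNReal.toReal_inv] at h2
  have hl : 0 < Real.log (Real.exp 1 + (dist x y)⁻¹) := log_exp_add_pos (by positivity)
  rw [le_div_iff₀ hl] at h2
  have h3 : Real.log (Real.exp 1 + R⁻¹) ≤ Real.log (Real.exp 1 + (dist x y)⁻¹) := by gcongr
  calc |(p x).toReal - (p y).toReal| * Real.log (Real.exp 1 + R⁻¹)
      ≤ b ^ 2 * |(p x).toReal⁻¹ - (p y).toReal⁻¹| * Real.log (Real.exp 1 + (dist x y)⁻¹) :=
        mul_le_mul h1 h3 (log_exp_add_pos (by positivity)).le (by positivity)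
    _ ≤ b ^ 2 * c := by
        rw [mul_assoc]
        exact mul_le_mul_of_nonneg_left h2 (by positivity)

lemma exists_decExp (hn : 0 < n) {p : Rn n → ℝ≥0∞} {pinvInf : ℝ} (hp : IsPLogWith p pinvInf)
    (hinf : 1 < essInf p (volume : Measure (Rn n)))
    (hsup : essSup p (volume : Measure (Rn n)) < ∞) :
    ∃ a b c : ℝ, DecExp (fun x => (p x).toReal) pinvInf⁻¹ a b c := by
  obtain ⟨-, a, b, c, h⟩ := exists_locExp hp.1.1 hp.2.1 hinf hsup
  obtain ⟨c', hc', hdec⟩ := hp.2.2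
  have : Nonempty (Fin n) := ⟨⟨0, hn⟩⟩
  have ha := h.one_lt
  have hb := h.b_pos
  have hnear : ∀ δ : ℝ, 0 < δ → ∃ x : Rn n, |(p x).toReal⁻¹ - pinvInf| ≤ δ := by
    intro δ hδ
    obtain ⟨x, hx⟩ := NormedSpace.exists_lt_norm ℝ (Rn n) (Real.exp (c' / δ))
    refine ⟨x, ?_⟩
    have h1 := hdec x
    simp only [ENNReal.toReal_inv] at h1
    refine h1.trans ?_
    have h2 : c' / δ ≤ Real.log (Real.exp 1 + ‖x‖) := by
      rw [Real.le_log_iff_exp_le (by positivity)]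
      linarith [Real.exp_pos 1]
    rw [div_le_iff₀ hδ] at h2
    rw [div_le_iff₀ (log_exp_add_pos (norm_nonneg _))]
    linarith
  have hlow : b⁻¹ ≤ pinvInf := by
    refine le_of_forall_pos_le_add fun δ hδ => ?_
    obtain ⟨x, hx⟩ := hnear δ hδ
    have := inv_anti₀ (h.pos x) (h.upper x)
    linarith [(abs_le.1 hx).2]
  have hupp : pinvInf ≤ a⁻¹ := by
    refine le_of_forall_pos_le_add fun δ hδ => ?_
    obtain ⟨x, hx⟩ := hnear δ hδ
    have := inv_anti₀ (one_pos.trans ha) (h.lower x)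
    linarith [(abs_le.1 hx).1]
  have hpi : 0 < pinvInf := (inv_pos.2 hb).trans_le hlow
  have hPb : pinvInf⁻¹ ≤ b := inv_le_of_inv_le₀ hb hlow
  refine ⟨a, b, max c (b ^ 2 * c'), ⟨h.meas, h.one_lt, h.lower, h.upper, fun x y R hR hxy =>
    (h.loc x y R hR hxy).trans (le_max_left _ _)⟩, ?_, hPb, fun x => le_trans ?_ (le_max_right _ _)⟩
  · exact (le_inv_comm₀ (one_pos.trans ha) hpi).2 hupp
  · have h1 := abs_sub_le_sq_mul_abs_inv_sub (h.pos x) (inv_pos.2 hpi) (h.upper x) hPb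
    have h2 := hdec x
    have hl : 0 < Real.log (Real.exp 1 + ‖x‖) := log_exp_add_pos (norm_nonneg _)
    simp only [ENNReal.toReal_inv] at h2
    rw [le_div_iff₀ hl] at h2
    rw [inv_inv] at h1
    refine (mul_le_mul_of_nonneg_right h1 hl.le).trans ?_
    rw [mul_assoc]
    exact mul_le_mul_of_nonneg_left h2 (by positivity)

lemma modularVE_indicator_div {p : Rn n → ℝ≥0∞} (hp0 : ∀ x, 0 < p x) (hpt : ∀ x, p x ≠ ∞)
    {B : Set (Rn n)} (hB : MeasurableSet B) (g : Rn n → ℝ≥0∞) (l : ℝ≥0∞) :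
    modularVE p (fun x => B.indicator g x / l) = ∫⁻ x in B, (l⁻¹ * g x) ^ (p x).toReal := by
  unfold modularVE phiVE
  rw [← lintegral_indicator hB]
  refine lintegral_congr fun x => ?_
  rw [if_neg (hpt x)]
  by_cases hx : x ∈ B
  · simp only [Set.indicator_of_mem hx]
    rw [mul_comm, div_eq_mul_inv]
  · simp only [Set.indicator_of_notMem hx]
    simp [ENNReal.toReal_pos (hp0 x).ne' (hpt x)]

section Luxemburg

variable {p : Rn n → ℝ≥0∞} {B : Set (Rn n)} {lam k : ℝ≥0∞}

lemma setLIntegral_le_one_of_mul_vLpNorm_lt (hp0 : ∀ x, 0 < p x) (hpt : ∀ x, p x ≠ ∞)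
    (hB : MeasurableSet B) {g : Rn n → ℝ≥0∞} (hl0 : lam ≠ 0) (hlt : lam ≠ ∞)
    (h : lam * vLpNorm p (B.indicator g) < k) :
    ∫⁻ x in B, (lam * (k⁻¹ * g x)) ^ (p x).toReal ≤ 1 := by
  have h' : vLpNorm p (B.indicator g) < k / lam := by
    rw [ENNReal.lt_div_iff_mul_lt (Or.inl hl0) (Or.inl hlt), mul_comm]
    exact h
  obtain ⟨l, hl, hlk⟩ := sInf_lt_iff.1 h'
  have hl : modularVE p (fun x => B.indicator g x / l) ≤ 1 := hl
  rw [modularVE_indicator_div hp0 hpt hB] at hl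
  refine le_trans (lintegral_mono fun x => ENNReal.rpow_le_rpow ?_ ENNReal.toReal_nonneg) hl
  rw [← mul_assoc, ← div_eq_mul_inv]
  refine mul_le_mul_left ?_ _
  rw [← ENNReal.inv_div (Or.inl hlt) (Or.inl hl0)]
  exact ENNReal.inv_le_inv.2 hlk.le

lemma mul_vLpNorm_le (hp0 : ∀ x, 0 < p x) (hpt : ∀ x, p x ≠ ∞)
    (hB : MeasurableSet B) {g : Rn n → ℝ≥0∞} (hl0 : lam ≠ 0) (hlt : lam ≠ ∞)
    (h : ∫⁻ x in B, (lam * (k⁻¹ * g x)) ^ (p x).toReal ≤ 1) :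
    lam * vLpNorm p (B.indicator g) ≤ k := by
  rw [mul_comm, ← ENNReal.le_div_iff_mul_le (Or.inl hl0) (Or.inl hlt)]
  refine sInf_le ?_
  change modularVE p (fun x => B.indicator g x / (k / lam)) ≤ 1
  rw [modularVE_indicator_div hp0 hpt hB, ENNReal.inv_div (Or.inl hlt) (Or.inl hl0)]
  simpa only [div_eq_mul_inv, mul_assoc] using h

end Luxemburg

lemma lconv_etaK_of_dim_zero (ν : ℕ) (m : ℝ) (f : Rn 0 → ℝ≥0∞) : lconv (etaK ν m) f = f := by
  funext x
  unfold lconv etaK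
  rw [volume_euclideanSpace_eq_dirac, lintegral_dirac,
    Subsingleton.elim x 0]
  simp

lemma morreySeqNorm_lconv_le {p q u : Rn n → ℝ≥0∞} {Pi a b c a' b' c' m ε : ℝ}
    (hp0 : ∀ x, 0 < p x) (hpt : ∀ x, p x ≠ ∞) (hqt : ∀ x, q x ≠ ∞)
    (h : DecExp (fun x => (p x).toReal) Pi a b c) (hQ : LocExp (fun x => (q x).toReal) a' b' c')
    (hn : 0 < n) (hm : n < m) (hε : 0 < ε)
    (he1 : ∀ x, n * ((p x)⁻¹.toReal - (u x)⁻¹.toReal) + ε ≤ n / (p x).toReal)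
    (he2 : ∀ x, n * ((p x)⁻¹.toReal - (u x)⁻¹.toReal) + ε ≤ (m - n) + n / Pi) :
    ∃ c : ℝ, 0 < c ∧ ∀ f : ℕ → Rn n → ℝ≥0∞, (∀ ν, Measurable (f ν)) →
      morreySeqNorm p u q (fun ν => lconv (etaK ν m) (f ν)) ≤
        ENNReal.ofReal c * morreySeqNorm p u q f := by
  obtain ⟨C, hC, hmain⟩ := h.morrey_lqR_lconv_le hQ hn hm hε he1 he2
  set K : ℝ≥0∞ := 1 + C with hK
  have hK1 : 1 ≤ K := le_self_add
  have hK0 : K ≠ 0 := (one_pos.trans_le hK1).ne'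
  have hKt : K ≠ ∞ := by finiteness
  refine ⟨K.toReal, ENNReal.toReal_pos hK0 hKt, fun f hf => ?_⟩
  rw [ENNReal.ofReal_toReal hKt, mul_comm, ← ENNReal.div_le_iff_le_mul (Or.inl hK0) (Or.inl hKt)]
  refine le_of_forall_gt_imp_ge_of_dense fun N hN => ?_
  rcases eq_or_ne N ∞ with rfl | hNt
  · exact le_top
  have hN0 : N ≠ 0 := (zero_le.trans_lt hN).ne'
  rw [ENNReal.div_le_iff_le_mul (Or.inl hK0) (Or.inl hKt)]
  have hlq : ∀ (g : ℕ → Rn n → ℝ≥0∞) x,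
      lqNorm (q x) (fun ν => g ν x) = lqR (q x).toReal fun ν => g ν x := by
    intro g x
    rw [lqNorm, if_neg (hqt x), lqR]
  have hsign : ∀ x, (n : ℝ) * ((u x)⁻¹.toReal - (p x)⁻¹.toReal) =
      -(n * ((p x)⁻¹.toReal - (u x)⁻¹.toReal)) := fun x => by ring
  have hmod : ∀ (x₀ : Rn n) (r : ℝ), 0 < r → ∫⁻ x in Metric.ball x₀ r,
      (ENNReal.ofReal (r ^ (-(n * ((p x₀)⁻¹.toReal - (u x₀)⁻¹.toReal)))) *
        lqR (q x).toReal fun ν => N⁻¹ * f ν x) ^ (p x).toReal ≤ 1 := by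
    intro x₀ r hr
    simp_rw [fun x => lqR_const_mul (hQ.pos x) N⁻¹ fun ν => f ν x]
    refine setLIntegral_le_one_of_mul_vLpNorm_lt hp0 hpt measurableSet_ball
      (ENNReal.ofReal_pos.2 (by positivity)).ne' ENNReal.ofReal_ne_top (lt_of_le_of_lt ?_ hN)
    unfold morreySeqNorm morreyNorm
    simp_rw [hlq, hsign]
    exact le_iSup_of_le x₀ (le_iSup_of_le r (le_iSup_of_le hr le_rfl))
  have hfin := hmain (fun ν x => N⁻¹ * f ν x) (fun ν => (hf ν).const_mul _) hmod
  unfold morreySeqNorm morreyNorm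
  simp_rw [hlq, hsign]
  refine iSup_le fun x₀ => iSup_le fun r => iSup_le fun hr => ?_
  refine mul_vLpNorm_le hp0 hpt measurableSet_ball
    (ENNReal.ofReal_pos.2 (by positivity)).ne' ENNReal.ofReal_ne_top ?_
  have hr' := hfin x₀ r hr
  simp_rw [fun ν x => lconv_const_mul (measurable_etaK (n := n) ν m) (hf ν) N⁻¹ x,
    fun x => lqR_const_mul (hQ.pos x) N⁻¹ fun ν => lconv (etaK ν m) (f ν) x] at hr'
  have hind : ∀ (g : Rn n → ℝ≥0∞) x, (Metric.ball x₀ r).indicator g x ^ (p x).toReal =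
      (Metric.ball x₀ r).indicator (fun x => g x ^ (p x).toReal) x := by
    intro g x
    by_cases hx : x ∈ Metric.ball x₀ r
    · simp [Set.indicator_of_mem hx]
    · simp [Set.indicator_of_notMem hx, ENNReal.zero_rpow_of_pos (h.pos x)]
  have hone := h.modular_inv_mul_le_one hK1 hKt (f := (Metric.ball x₀ r).indicator fun x =>
    ENNReal.ofReal (r ^ (-(n * ((p x₀)⁻¹.toReal - (u x₀)⁻¹.toReal)))) *
      (N⁻¹ * lqR (q x).toReal fun ν => lconv (etaK ν m) (f ν) x)) (by
    simp_rw [hind]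
    rw [lintegral_indicator measurableSet_ball]
    exact hr'.trans le_add_self)
  refine le_trans (le_of_eq ?_) hone
  rw [← lintegral_indicator measurableSet_ball]
  refine lintegral_congr fun x => ?_
  rw [← hind]
  by_cases hx : x ∈ Metric.ball x₀ r
  · simp only [Set.indicator_of_mem hx]
    rw [mul_comm N K, ENNReal.mul_inv (Or.inl hK0) (Or.inl hKt)]
    congr 1
    ring
  · simp only [Set.indicator_of_notMem hx, mul_zero]

/-- the convolution inequality in variable exponent Morrey spaces,
with `m > n + n·c_{p,u}`. -/
theorem statement2 (n : ℕ) (p q u : Rn n → ℝ≥0∞) (pinvInf : ℝ)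
    (hp : IsPLogWith p pinvInf) (hq : IsPLog q) (hu : IsVarExp u)
    (hpm : 1 < essInf p (volume : Measure (Rn n)))
    (hpu : ∀ᵐ x : Rn n ∂(volume : Measure (Rn n)), p x ≤ u x)
    (husup : (⨆ x : Rn n, u x) < ∞)
    (hqm : 1 < essInf q (volume : Measure (Rn n)))
    (hqp : essSup q (volume : Measure (Rn n)) < ∞)
    (m : ℝ) (hm : (n : ℝ) + n * cpu p u pinvInf < m) :
    ∃ c : ℝ, 0 < c ∧ ∀ f : ℕ → Rn n → ℝ≥0∞, (∀ ν, Measurable (f ν)) →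
      morreySeqNorm p u q (fun ν => lconv (etaK ν m) (f ν)) ≤
        ENNReal.ofReal c * morreySeqNorm p u q f := by
  rcases Nat.eq_zero_or_pos n with rfl | hn
  · refine ⟨1, one_pos, fun f _ => ?_⟩
    simp [lconv_etaK_of_dim_zero]
  have hn' : (0 : ℝ) < n := by exact_mod_cast hn
  obtain ⟨qInf, hq'⟩ := hq
  have hpsup : essSup p (volume : Measure (Rn n)) < ∞ :=
    (essSup_le_of_ae_le _ (hpu.mono fun x hx => hx.trans (le_iSup u x))).trans_lt husup
  obtain ⟨hqt, a', b', c', hQ⟩ := exists_locExp hq'.1.1 hq'.2.1 hqm hqp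
  obtain ⟨hpt, -⟩ := exists_locExp hp.1.1 hp.2.1 hpm hpsup
  obtain ⟨a, b, c, h⟩ := exists_decExp hn hp hpm hpsup
  have hcpu : 0 ≤ cpu p u pinvInf := le_max_left _ _
  have hm0 : (n : ℝ) < m := by nlinarith
  set U := ⨆ x, u x with hU
  have hU0 : U ≠ 0 := ((hu.2.1 0).trans_le (le_iSup u 0)).ne'
  have hκ : 0 < U⁻¹.toReal :=
    ENNReal.toReal_pos (ENNReal.inv_ne_zero.2 husup.ne) (ENNReal.inv_ne_top.2 hU0)
  have hκu : ∀ x, U⁻¹.toReal ≤ (u x)⁻¹.toReal := fun x =>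
    ENNReal.toReal_mono (ENNReal.inv_ne_top.2 (hu.2.1 x).ne')
      (ENNReal.inv_le_inv.2 (le_iSup u x))
  have hbdd : BddAbove (Set.range fun x => (p x)⁻¹.toReal - (u x)⁻¹.toReal) := by
    refine ⟨1, ?_⟩
    rintro _ ⟨x, rfl⟩
    have h1 : (p x)⁻¹.toReal ≤ 1 := by
      rw [ENNReal.toReal_inv]
      exact inv_le_one_of_one_le₀ (h.one_lt' x).le
    have h2 : 0 ≤ (u x)⁻¹.toReal := ENNReal.toReal_nonneg
    simp only
    linarith
  have hd : ∀ x, (p x)⁻¹.toReal - (u x)⁻¹.toReal ≤ cpu p u pinvInf + pinvInf := by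
    intro x
    have h1 := le_ciSup hbdd x
    have h2 : (⨆ x, ((p x)⁻¹.toReal - (u x)⁻¹.toReal)) - pinvInf ≤ cpu p u pinvInf :=
      le_max_right _ _
    linarith
  refine morreySeqNorm_lconv_le (ε := min (n * U⁻¹.toReal) (m - n - n * cpu p u pinvInf))
    hp.1.2.1 hpt hqt h hQ hn hm0 (lt_min (by positivity) (by linarith)) ?_ ?_
  · intro x
    have h1 := min_le_left (n * U⁻¹.toReal) (m - n - n * cpu p u pinvInf)
    have h2 := mul_le_mul_of_nonneg_left (hκu x) hn'.le
    rw [div_eq_mul_inv, ← ENNReal.toReal_inv]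
    linarith
  · intro x
    have h1 := min_le_right (n * U⁻¹.toReal) (m - n - n * cpu p u pinvInf)
    have h2 := mul_le_mul_of_nonneg_left (hd x) hn'.le
    rw [div_eq_mul_inv, inv_inv]
    linarith

end
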